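/- arXiv:1508.04386 — 4 statements merged into one kernel-verified Lean document; each statement's English description precedes it below -/
import Mathlib

section
/- Fix Q, M > 0 and N ≥ 0. Let g : [0,∞) → [0,∞) be a function, and let f : [0,∞) → ℝ be smooth, such that: (a) τ^k |f^{(k)}(τ)| ≤ M τ^N g(τ) for all τ ≥ 0 and every integer k with 0 ≤ k ≤ ⌈Q+N⌉+2; and either (b₁) g is increasing with g(2τ) ≤ 2^Q g(τ) for all τ ≥ 0, or (b₂) g is decreasing with g(2τ) ≥ 2^{−1+Q} g(τ) for all τ ≥ 0. Then there is a constant C > 0, depending only on Q, M and N, such that for every λ = x + iy ∈ ℂ with x > 0, | ∫_0^∞ e^{−λτ} f(τ) dτ | ≤ C |λ|^{−1−N} g(1/|λ|). -/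
open MeasureTheory Complex

/-!
Split the Laplace integral at `r = 1 / |λ|`. On `(0, r]` bound the exponential by `1`. On `(r, ∞)`
integrate by parts `K = ⌈Q + N⌉ + 2` times: each step gains a factor `1 / λ` and leaves a boundary
term at `r`, and the last integrand decays at least like `τ⁻²`, so again the exponential can be
bounded by `1`. Iterating the doubling condition compares `g τ` with `g r` up to a power of `τ / r`,
so that every contribution is a multiple of `r ^ (N + 1) * g r`.
-/

open Set Filter Topology Asymptotics

theorem contDiffAt_iteratedDeriv {F : Type*} [NormedAddCommGroup F] [NormedSpace ℝ F] {f : ℝ → F}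
    {m n : WithTop ℕ∞} {k : ℕ} {τ : ℝ} (hf : ContDiffAt ℝ n f τ) (hmn : m + k ≤ n) :
    ContDiffAt ℝ m (iteratedDeriv k f) τ := by
  rw [iteratedDeriv_eq_equiv_comp]
  exact (LinearIsometryEquiv.contDiff _).contDiffAt.comp τ (hf.iteratedFDeriv_right hmn)

theorem norm_iteratedDeriv_ofReal_comp {f : ℝ → ℝ} {k : ℕ} {τ : ℝ} (hf : ContDiffAt ℝ k f τ) :
    ‖iteratedDeriv k (fun t => (f t : ℂ)) τ‖ = |iteratedDeriv k f τ| := by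
  rw [← Real.norm_eq_abs, ← norm_iteratedFDeriv_eq_norm_iteratedDeriv,
    ← norm_iteratedFDeriv_eq_norm_iteratedDeriv]
  exact ofRealLI.norm_iteratedFDeriv_comp_left hf le_rfl

section ScaledPowers

variable {r a s B : ℝ}

theorem rpow_mul_div_rpow {τ : ℝ} (hr : 0 < r) (hτ : 0 < τ) (a b : ℝ) :
    τ ^ a * (τ / r) ^ b = r ^ a * (τ / r) ^ (a + b) := by
  rw [Real.rpow_add (by positivity), Real.div_rpow hτ.le hr.le a]
  field_simp

theorem integrableOn_Ioi_div_rpow (hr : 0 < r) (ha : a < -1) :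
    IntegrableOn (fun τ => (τ / r) ^ a) (Ioi r) := by
  simp only [div_eq_inv_mul]
  rw [integrableOn_Ioi_comp_mul_left_iff (· ^ a) r (inv_pos.2 hr), inv_mul_cancel₀ hr.ne']
  exact integrableOn_Ioi_rpow_of_lt ha one_pos

theorem integral_Ioi_div_rpow (hr : 0 < r) (ha : a < -1) :
    ∫ τ in Ioi r, (τ / r) ^ a = r / (-a - 1) := by
  simp only [div_eq_inv_mul]
  rw [integral_comp_mul_left_Ioi (· ^ a) r (inv_pos.2 hr), inv_mul_cancel₀ hr.ne', inv_inv,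
    integral_Ioi_rpow_of_lt ha one_pos, Real.one_rpow, neg_div, ← div_neg, smul_eq_mul,
    mul_one_div, neg_add']
  ring

theorem integrableOn_Ioc_div_rpow (hr : 0 < r) (ha : -1 < a) :
    IntegrableOn (fun τ => (τ / r) ^ a) (Ioc 0 r) := by
  rw [← intervalIntegrable_iff_integrableOn_Ioc_of_le hr.le]
  simpa [div_eq_mul_inv, hr.ne'] using
    (intervalIntegral.intervalIntegrable_rpow' (a := 0) (b := 1) ha).comp_mul_right (c := r⁻¹)

theorem integral_Ioc_div_rpow (hr : 0 < r) (ha : -1 < a) :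
    ∫ τ in Ioc 0 r, (τ / r) ^ a = r / (a + 1) := by
  rw [← intervalIntegral.integral_of_le hr.le,
    intervalIntegral.integral_comp_div (· ^ a) hr.ne', zero_div, div_self hr.ne',
    integral_rpow (.inl ha), Real.one_rpow, Real.zero_rpow (by linarith), sub_zero, smul_eq_mul,
    mul_one_div]

theorem le_div_pow_mul_div_rpow_sub {k : ℕ} {τ y : ℝ} (hr : 0 < r) (hτ : 0 < τ)
    (hy : τ ^ k * y ≤ B * (τ / r) ^ s) : y ≤ B / r ^ k * (τ / r) ^ (s - k) := by
  calc y ≤ B * (τ / r) ^ s / τ ^ k := (le_div_iff₀' (by positivity)).2 hy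
    _ = B / r ^ k * (τ / r) ^ (s - k) := by
      rw [Real.rpow_sub_natCast (by positivity), div_pow]
      field_simp

theorem isBigO_rpow_of_pow_mul_norm_le {F : Type*} [Norm F] {f : ℝ → F} {k : ℕ}
    (hr : 0 < r) (hf : ∀ τ ∈ Ici r, τ ^ k * ‖f τ‖ ≤ B * (τ / r) ^ s) :
    f =O[atTop] fun τ => τ ^ (s - k) := by
  refine .of_bound (B / r ^ k / r ^ (s - k)) ?_
  filter_upwards [eventually_ge_atTop r] with τ hτ
  have hτ0 : 0 < τ := hr.trans_le hτ
  rw [Real.norm_of_nonneg (by positivity), div_mul_eq_mul_div, mul_div_assoc,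
    ← Real.div_rpow hτ0.le hr.le]
  exact le_div_pow_mul_div_rpow_sub hr hτ0 (hf τ hτ)

end ScaledPowers

section Laplace

variable {E : Type*} [NormedAddCommGroup E] [NormedSpace ℂ E] {lam : ℂ} {f : ℝ → E}
  {r a s A B : ℝ} {K : ℕ}

theorem norm_exp_neg_mul_ofReal (lam : ℂ) (τ : ℝ) :
    ‖exp (-lam * τ)‖ = Real.exp (-lam.re * τ) := by
  simp [norm_exp]

theorem norm_exp_neg_mul_smul_le (hlam : 0 ≤ lam.re) {τ : ℝ} (hτ : 0 ≤ τ) (v : E) :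
    ‖exp (-lam * τ) • v‖ ≤ ‖v‖ := by
  rw [norm_smul, norm_exp_neg_mul_ofReal]
  exact mul_le_of_le_one_left (norm_nonneg v) (Real.exp_le_one_iff.2 (by nlinarith))

theorem isBigO_exp_neg_mul_smul_of_isBigO_rpow (hlam : 0 < lam.re)
    (hf : f =O[atTop] fun τ => τ ^ s) :
    (fun τ : ℝ => exp (-lam * τ) • f τ) =O[atTop] fun τ => Real.exp (-(lam.re / 2) * τ) := by
  have hexp : (fun τ : ℝ => exp (-lam * τ)) =O[atTop] fun τ => Real.exp (-lam.re * τ) :=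
    .of_norm_eventuallyLE (.of_forall fun τ => (norm_exp_neg_mul_ofReal lam τ).le)
  have hgrowth : f =O[atTop] fun τ => Real.exp (lam.re / 2 * τ) :=
    hf.trans (isLittleO_rpow_exp_pos_mul_atTop s (half_pos hlam)).isBigO
  refine (hexp.smul hgrowth).congr_right fun τ => ?_
  rw [smul_eq_mul, ← Real.exp_add]
  ring_nf

theorem integrableOn_Ioi_exp_neg_mul_smul (hlam : 0 < lam.re) (hc : ContinuousOn f (Ici r))
    (hf : f =O[atTop] fun τ => τ ^ s) :
    IntegrableOn (fun τ : ℝ => exp (-lam * τ) • f τ) (Ioi r) := by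
  have hcont : ContinuousOn (fun τ : ℝ => exp (-lam * τ) • f τ) (Ici r) := by fun_prop
  exact ((hcont.locallyIntegrableOn measurableSet_Ici).integrableOn_of_isBigO_atTop
    (isBigO_exp_neg_mul_smul_of_isBigO_rpow hlam hf)
    ⟨Ioi 0, Ioi_mem_atTop 0, exp_neg_integrableOn_Ioi 0 (half_pos hlam)⟩).mono_set
      Ioi_subset_Ici_self

theorem tendsto_exp_neg_mul_smul_atTop (hlam : 0 < lam.re) (hf : f =O[atTop] fun τ => τ ^ s) :
    Tendsto (fun τ : ℝ => exp (-lam * τ) • f τ) atTop (𝓝 0) := by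
  refine (isBigO_exp_neg_mul_smul_of_isBigO_rpow hlam hf).trans_tendsto ?_
  simpa using tendsto_rpow_mul_exp_neg_mul_atTop_nhds_zero 0 _ (half_pos hlam)

theorem smul_integral_Ioi_exp_neg_mul_smul [CompleteSpace E] {f' : ℝ → E} {s' : ℝ}
    (hlam : 0 < lam.re) (hderiv : ∀ τ ∈ Ici r, HasDerivAt f (f' τ) τ)
    (hc' : ContinuousOn f' (Ici r)) (hf : f =O[atTop] fun τ => τ ^ s)
    (hf' : f' =O[atTop] fun τ => τ ^ s') :
    lam • ∫ τ in Ioi r, exp (-lam * τ) • f τ =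
      exp (-lam * r) • f r + ∫ τ in Ioi r, exp (-lam * τ) • f' τ := by
  have hint := integrableOn_Ioi_exp_neg_mul_smul hlam (HasDerivAt.continuousOn hderiv) hf
  have hint' := integrableOn_Ioi_exp_neg_mul_smul hlam hc' hf'
  have hprod (τ : ℝ) (hτ : τ ∈ Ici r) : HasDerivAt (fun τ : ℝ => exp (-lam * τ) • f τ)
      (exp (-lam * τ) • f' τ - lam • exp (-lam * τ) • f τ) τ := by
    have hexp : HasDerivAt (fun t : ℝ => exp (-lam * t)) (exp (-lam * τ) * (-lam * 1)) τ :=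
      ((hasDerivAt_id τ).ofReal_comp.const_mul (-lam)).cexp
    refine (hexp.smul (hderiv τ hτ)).congr_deriv ?_
    module
  have hFTC := integral_Ioi_of_hasDerivAt_of_tendsto' hprod (hint'.sub (hint.smul lam))
    (tendsto_exp_neg_mul_smul_atTop hlam hf)
  rw [integral_sub hint' (by exact hint.smul lam), integral_smul, sub_eq_iff_eq_add] at hFTC
  rw [hFTC]
  abel

theorem norm_integral_Ioi_exp_neg_mul_smul_le_add [CompleteSpace E] {f' : ℝ → E} {s' : ℝ}
    (hlam : 0 < lam.re) (hr : 0 ≤ r) (hderiv : ∀ τ ∈ Ici r, HasDerivAt f (f' τ) τ)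
    (hc' : ContinuousOn f' (Ici r)) (hf : f =O[atTop] fun τ => τ ^ s)
    (hf' : f' =O[atTop] fun τ => τ ^ s') :
    ‖∫ τ in Ioi r, exp (-lam * τ) • f τ‖ ≤
      ‖lam‖⁻¹ * (‖f r‖ + ‖∫ τ in Ioi r, exp (-lam * τ) • f' τ‖) := by
  rw [le_inv_mul_iff₀ (norm_pos_iff.2 (ne_zero_of_re_pos hlam)), ← norm_smul,
    smul_integral_Ioi_exp_neg_mul_smul hlam hderiv hc' hf hf']
  exact (norm_add_le _ _).trans (by gcongr; exact norm_exp_neg_mul_smul_le hlam.le hr _)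

theorem norm_integral_Ioi_exp_neg_mul_smul_le_sum [CompleteSpace E] {s : ℕ → ℝ}
    (hlam : 0 < lam.re) (hr : 0 ≤ r) (hf : ∀ τ ∈ Ici r, ContDiffAt ℝ K f τ)
    (hO : ∀ k ≤ K, iteratedDeriv k f =O[atTop] fun τ => τ ^ s k) :
    ‖∫ τ in Ioi r, exp (-lam * τ) • f τ‖ ≤
      ∑ k ∈ Finset.range K, ‖lam‖⁻¹ ^ (k + 1) * ‖iteratedDeriv k f r‖ +
        ‖lam‖⁻¹ ^ K * ‖∫ τ in Ioi r, exp (-lam * τ) • iteratedDeriv K f τ‖ := by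
  induction K with
  | zero => simp
  | succ K ih =>
    have hderiv (τ : ℝ) (hτ : τ ∈ Ici r) :
        HasDerivAt (iteratedDeriv K f) (iteratedDeriv (K + 1) f τ) τ := by
      rw [iteratedDeriv_succ]
      exact ((contDiffAt_iteratedDeriv (hf τ hτ) (by push_cast; rw [add_comm])).differentiableAt
        one_ne_zero).hasDerivAt
    have hcont : ContinuousOn (iteratedDeriv (K + 1) f) (Ici r) := fun τ hτ =>
      (contDiffAt_iteratedDeriv (m := 0) (hf τ hτ) (by simp)).continuousAt.continuousWithinAt
    have hparts := norm_integral_Ioi_exp_neg_mul_smul_le_add hlam hr hderiv hcont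
      (hO K K.le_succ) (hO (K + 1) le_rfl)
    calc _ ≤ _ := ih (fun τ hτ => (hf τ hτ).of_le (by exact_mod_cast K.le_succ))
          fun k hk => hO k (hk.trans K.le_succ)
      _ ≤ _ := add_le_add_right (mul_le_mul_of_nonneg_left hparts (by positivity)) _
      _ = _ := by rw [Finset.sum_range_succ]; ring

theorem norm_integral_Ioi_exp_neg_mul_smul_le_of_rpow (hlam : 0 ≤ lam.re) (hr : 0 < r)
    (ha : a < -1) (hf : ∀ τ ∈ Ioi r, ‖f τ‖ ≤ B * (τ / r) ^ a) :
    ‖∫ τ in Ioi r, exp (-lam * τ) • f τ‖ ≤ B * (r / (-a - 1)) := by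
  rw [← integral_Ioi_div_rpow hr ha, ← integral_const_mul]
  exact norm_integral_le_of_norm_le ((integrableOn_Ioi_div_rpow hr ha).const_mul B) <|
    ae_restrict_of_forall_mem measurableSet_Ioi fun τ hτ =>
      (norm_exp_neg_mul_smul_le hlam (hr.trans hτ).le _).trans (hf τ hτ)

theorem norm_integral_Ioc_exp_neg_mul_smul_le_of_rpow (hlam : 0 ≤ lam.re) (hr : 0 < r)
    (ha : -1 < a) (hf : ∀ τ ∈ Ioc 0 r, ‖f τ‖ ≤ A * (τ / r) ^ a) :
    ‖∫ τ in Ioc 0 r, exp (-lam * τ) • f τ‖ ≤ A * (r / (a + 1)) := by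
  rw [← integral_Ioc_div_rpow hr ha, ← integral_const_mul]
  exact norm_integral_le_of_norm_le ((integrableOn_Ioc_div_rpow hr ha).const_mul A) <|
    ae_restrict_of_forall_mem measurableSet_Ioc fun τ hτ =>
      (norm_exp_neg_mul_smul_le hlam hτ.1.le _).trans (hf τ hτ)

theorem integrableOn_Ioc_exp_neg_mul_smul (hlam : 0 ≤ lam.re) (hr : 0 < r) (ha : -1 < a)
    (hc : ContinuousOn f (Ioc 0 r)) (hf : ∀ τ ∈ Ioc 0 r, ‖f τ‖ ≤ A * (τ / r) ^ a) :
    IntegrableOn (fun τ : ℝ => exp (-lam * τ) • f τ) (Ioc 0 r) := by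
  have hcont : ContinuousOn (fun τ : ℝ => exp (-lam * τ) • f τ) (Ioc 0 r) := by fun_prop
  exact ((integrableOn_Ioc_div_rpow hr ha).const_mul A).mono'
    (hcont.aestronglyMeasurable measurableSet_Ioc) <|
    ae_restrict_of_forall_mem measurableSet_Ioc fun τ hτ =>
      (norm_exp_neg_mul_smul_le hlam hτ.1.le _).trans (hf τ hτ)

theorem norm_integral_Ioi_exp_neg_mul_smul_le [CompleteSpace E] (hlam : 0 < lam.re)
    (hr : ‖lam‖⁻¹ ≤ r) (hf : ∀ τ ∈ Ici r, ContDiffAt ℝ K f τ) (hsK : s + 2 ≤ K)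
    (hB : ∀ k ≤ K, ∀ τ ∈ Ici r, τ ^ k * ‖iteratedDeriv k f τ‖ ≤ B * (τ / r) ^ s) :
    ‖∫ τ in Ioi r, exp (-lam * τ) • f τ‖ ≤ (K + 1) * B * r := by
  have hr0 : 0 < r := (inv_pos.2 (norm_pos_iff.2 (ne_zero_of_re_pos hlam))).trans_le hr
  have hboundary (k : ℕ) (hk : k ≤ K) : r ^ k * ‖iteratedDeriv k f r‖ ≤ B := by
    simpa [hr0.ne'] using hB k hk r self_mem_Ici
  have hB0 : 0 ≤ B := le_trans (by positivity) (hboundary 0 K.zero_le)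
  have hremainder : ‖∫ τ in Ioi r, exp (-lam * τ) • iteratedDeriv K f τ‖ ≤ B / r ^ K * r :=
    calc _ ≤ B / r ^ K * (r / (-(s - K) - 1)) :=
          norm_integral_Ioi_exp_neg_mul_smul_le_of_rpow hlam.le hr0 (by linarith) fun τ hτ =>
            le_div_pow_mul_div_rpow_sub hr0 (hr0.trans hτ) (hB K le_rfl τ (Ioi_subset_Ici_self hτ))
      _ ≤ B / r ^ K * r := by gcongr; exact div_le_self hr0.le (by linarith)
  have hterm (k : ℕ) (hk : k ∈ Finset.range K) :
      ‖lam‖⁻¹ ^ (k + 1) * ‖iteratedDeriv k f r‖ ≤ B * r :=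
    calc _ ≤ r ^ (k + 1) * ‖iteratedDeriv k f r‖ := by gcongr
      _ = r ^ k * ‖iteratedDeriv k f r‖ * r := by ring
      _ ≤ B * r := by gcongr; exact hboundary k (Finset.mem_range.1 hk).le
  calc _ ≤ ∑ k ∈ Finset.range K, ‖lam‖⁻¹ ^ (k + 1) * ‖iteratedDeriv k f r‖ +
        ‖lam‖⁻¹ ^ K * ‖∫ τ in Ioi r, exp (-lam * τ) • iteratedDeriv K f τ‖ :=
        norm_integral_Ioi_exp_neg_mul_smul_le_sum hlam hr0.le hf fun k hk =>
          isBigO_rpow_of_pow_mul_norm_le hr0 (hB k hk)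
    _ ≤ K * (B * r) + r ^ K * (B / r ^ K * r) := by
      gcongr
      simpa using Finset.sum_le_sum hterm
    _ = (K + 1) * B * r := by field_simp

theorem norm_integral_Ioi_zero_exp_neg_mul_smul_le [CompleteSpace E] (hlam : 0 < lam.re)
    (hr : ‖lam‖⁻¹ ≤ r) (hf : ContDiffOn ℝ K f (Ioi 0)) (ha : -1 < a) (hsK : s + 2 ≤ K)
    (hA : ∀ τ ∈ Ioc 0 r, ‖f τ‖ ≤ A * (τ / r) ^ a)
    (hB : ∀ k ≤ K, ∀ τ ∈ Ici r, τ ^ k * ‖iteratedDeriv k f τ‖ ≤ B * (τ / r) ^ s) :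
    ‖∫ τ in Ioi (0 : ℝ), exp (-lam * τ) • f τ‖ ≤ (A / (a + 1) + (K + 1) * B) * r := by
  have hr0 : 0 < r := (inv_pos.2 (norm_pos_iff.2 (ne_zero_of_re_pos hlam))).trans_le hr
  have hIci : Ici r ⊆ Ioi 0 := Ici_subset_Ioi.2 hr0
  have hnear := integrableOn_Ioc_exp_neg_mul_smul hlam.le hr0 ha
    (hf.continuousOn.mono Ioc_subset_Ioi_self) hA
  have hfar := integrableOn_Ioi_exp_neg_mul_smul hlam (hf.continuousOn.mono hIci)
    (isBigO_rpow_of_pow_mul_norm_le (k := 0) hr0 (by simpa using hB 0 K.zero_le))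
  rw [← Ioc_union_Ioi_eq_Ioi hr0.le,
    setIntegral_union Ioc_disjoint_Ioi_same measurableSet_Ioi hnear hfar]
  calc _ ≤ A * (r / (a + 1)) + (K + 1) * B * r :=
        norm_add_le_of_le (norm_integral_Ioc_exp_neg_mul_smul_le_of_rpow hlam.le hr0 ha hA)
          (norm_integral_Ioi_exp_neg_mul_smul_le hlam hr
            (fun τ hτ => hf.contDiffAt (Ioi_mem_nhds (hIci hτ))) hsK hB)
    _ = _ := by ring

end Laplace

section Doubling

variable {g : ℝ → ℝ} {Q p r s t τ : ℝ}

theorem le_rpow_mul_of_monotoneOn_of_doubling (hp : 0 ≤ p) (hmono : MonotoneOn g (Ioi 0))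
    (hdbl : ∀ τ > 0, g (2 * τ) ≤ 2 ^ p * g τ) (hs : 0 < s) (hgs : 0 ≤ g s) (hst : s ≤ t) :
    g t ≤ 2 ^ p * (t / s) ^ p * g s := by
  have hiter (n : ℕ) : g (2 ^ n * s) ≤ (2 ^ p) ^ n * g s := by
    induction n with
    | zero => simp
    | succ n ih =>
      calc g (2 ^ (n + 1) * s) = g (2 * (2 ^ n * s)) := by rw [pow_succ', mul_assoc]
        _ ≤ 2 ^ p * g (2 ^ n * s) := hdbl _ (by positivity)
        _ ≤ 2 ^ p * ((2 ^ p) ^ n * g s) := by gcongr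
        _ = (2 ^ p) ^ (n + 1) * g s := by ring
  obtain ⟨n, hn, hn'⟩ := exists_nat_pow_near ((one_le_div hs).2 hst) (one_lt_two (α := ℝ))
  calc g t ≤ g (2 ^ (n + 1) * s) :=
        hmono (hs.trans_le hst) (mem_Ioi.2 (by positivity)) ((div_lt_iff₀ hs).1 hn').le
    _ ≤ 2 ^ p * (2 ^ n) ^ p * g s := by
      rw [← Real.rpow_pow_comm two_pos.le, ← pow_succ']
      exact hiter (n + 1)
    _ ≤ 2 ^ p * (t / s) ^ p * g s := by gcongr

theorem le_rpow_mul_of_antitoneOn_of_doubling (hp : 0 ≤ p) (hanti : AntitoneOn g (Ioi 0))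
    (hdbl : ∀ τ > 0, g τ ≤ 2 ^ p * g (2 * τ)) (hs : 0 < s) (hgt : 0 ≤ g t) (hst : s ≤ t) :
    g s ≤ 2 ^ p * (t / s) ^ p * g t := by
  have hreflect := le_rpow_mul_of_monotoneOn_of_doubling (g := fun τ => g τ⁻¹) hp
    (fun a ha b hb hab => hanti (inv_pos.2 (mem_Ioi.1 hb)) (inv_pos.2 (mem_Ioi.1 ha))
      (inv_anti₀ ha hab))
    (fun τ hτ => (hdbl (2 * τ)⁻¹ (by positivity)).trans_eq (by field_simp))
    (inv_pos.2 (hs.trans_le hst)) (by rwa [inv_inv]) (inv_anti₀ hs hst)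
  simpa only [inv_inv, inv_div_inv] using hreflect

/-- The doubling condition on the weight `g`, required on `(0, ∞)` only: `g` increases there and
grows at most like `τ ^ Q`, or it decreases there and decays at most like `τ ^ (Q - 1)`, both
measured on the dyadic scale. -/
def IsDoublingWeight (Q : ℝ) (g : ℝ → ℝ) : Prop :=
  (MonotoneOn g (Ioi 0) ∧ ∀ τ > 0, g (2 * τ) ≤ 2 ^ Q * g τ) ∨
    (AntitoneOn g (Ioi 0) ∧ ∀ τ > 0, 2 ^ (-1 + Q) * g τ ≤ g (2 * τ))

namespace IsDoublingWeight

theorem le_of_ge (h : IsDoublingWeight Q g) (hQ : 0 ≤ Q) (hr : 0 < r) (hgr : 0 ≤ g r)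
    (hτ : r ≤ τ) : g τ ≤ 2 ^ Q * (τ / r) ^ Q * g r := by
  rcases h with ⟨hmono, hdbl⟩ | ⟨hanti, -⟩
  · exact le_rpow_mul_of_monotoneOn_of_doubling hQ hmono hdbl hr hgr hτ
  · refine (hanti hr (hr.trans_le hτ) hτ).trans (le_mul_of_one_le_left hgr ?_)
    exact one_le_mul_of_one_le_of_one_le (Real.one_le_rpow one_le_two hQ)
      (Real.one_le_rpow ((one_le_div hr).2 hτ) hQ)

theorem le_of_le (h : IsDoublingWeight Q g) (hQ : 0 ≤ Q) (hg : ∀ τ > 0, 0 ≤ g τ) (hτ0 : 0 < τ)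
    (hτ : τ ≤ r) : g τ ≤ 2 * (τ / r) ^ (min Q 1 - 1) * g r := by
  have hr : 0 < r := hτ0.trans_le hτ
  have hp : 0 ≤ 1 - min Q 1 := sub_nonneg.2 (min_le_right Q 1)
  have hinv : (r / τ) ^ (1 - min Q 1) = (τ / r) ^ (min Q 1 - 1) := by
    rw [← inv_div, Real.inv_rpow (by positivity), ← Real.rpow_neg (by positivity), neg_sub]
  rw [← hinv]
  rcases h with ⟨hmono, -⟩ | ⟨hanti, hdbl⟩
  · refine (hmono hτ0 hr hτ).trans (le_mul_of_one_le_left (hg r hr) ?_)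
    exact one_le_mul_of_one_le_of_one_le one_le_two (Real.one_le_rpow ((one_le_div hτ0).2 hτ) hp)
  · have hdbl' (t : ℝ) (ht : t > 0) : g t ≤ 2 ^ (1 - min Q 1) * g (2 * t) :=
      calc g t ≤ (2 ^ (-1 + Q))⁻¹ * g (2 * t) := (le_inv_mul_iff₀ (by positivity)).2 (hdbl t ht)
        _ = 2 ^ (1 - Q) * g (2 * t) := by rw [← Real.rpow_neg two_pos.le]; ring_nf
        _ ≤ 2 ^ (1 - min Q 1) * g (2 * t) := by
          gcongr
          exacts [hg _ (by positivity), one_le_two, min_le_left Q 1]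
    calc g τ ≤ 2 ^ (1 - min Q 1) * (r / τ) ^ (1 - min Q 1) * g r :=
          le_rpow_mul_of_antitoneOn_of_doubling hp hanti hdbl' hτ0 (hg r hr) hτ
      _ ≤ 2 * (r / τ) ^ (1 - min Q 1) * g r := by
        gcongr
        · exact hg r hr
        · exact Real.rpow_le_self_of_one_le one_le_two (by linarith [le_min hQ zero_le_one])

theorem rpow_mul_le_of_ge (h : IsDoublingWeight Q g) (hQ : 0 ≤ Q) (hr : 0 < r)
    (hgr : 0 ≤ g r) (hτ : r ≤ τ) (N : ℝ) :
    τ ^ N * g τ ≤ 2 ^ Q * (r ^ N * g r) * (τ / r) ^ (N + Q) := by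
  have hτ0 : 0 < τ := hr.trans_le hτ
  calc τ ^ N * g τ ≤ τ ^ N * (2 ^ Q * (τ / r) ^ Q * g r) := by
        gcongr
        exact h.le_of_ge hQ hr hgr hτ
    _ = 2 ^ Q * g r * (τ ^ N * (τ / r) ^ Q) := by ring
    _ = 2 ^ Q * (r ^ N * g r) * (τ / r) ^ (N + Q) := by rw [rpow_mul_div_rpow hr hτ0]; ring

theorem rpow_mul_le_of_le (h : IsDoublingWeight Q g) (hQ : 0 ≤ Q) (hg : ∀ τ > 0, 0 ≤ g τ)
    (hτ0 : 0 < τ) (hτ : τ ≤ r) (N : ℝ) :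
    τ ^ N * g τ ≤ 2 * (r ^ N * g r) * (τ / r) ^ (N + (min Q 1 - 1)) := by
  have hr : 0 < r := hτ0.trans_le hτ
  calc τ ^ N * g τ ≤ τ ^ N * (2 * (τ / r) ^ (min Q 1 - 1) * g r) := by
        gcongr
        exact h.le_of_le hQ hg hτ0 hτ
    _ = 2 * g r * (τ ^ N * (τ / r) ^ (min Q 1 - 1)) := by ring
    _ = 2 * (r ^ N * g r) * (τ / r) ^ (N + (min Q 1 - 1)) := by
      rw [rpow_mul_div_rpow hr hτ0]; ring

end IsDoublingWeight

end Doubling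

theorem statement15_general {E : Type*} [NormedAddCommGroup E] [NormedSpace ℂ E] [CompleteSpace E]
    {Q M N : ℝ} (hQ : 0 ≤ Q) (hM : 0 ≤ M) (hN : 0 < N + min Q 1) {f : ℝ → E} {g : ℝ → ℝ}
    (hf : ContDiffOn ℝ (⌈Q + N⌉₊ + 2 : ℕ) f (Ioi 0)) (hg : ∀ τ > 0, 0 ≤ g τ)
    (hfg : ∀ k ≤ ⌈Q + N⌉₊ + 2, ∀ τ > 0, τ ^ k * ‖iteratedDeriv k f τ‖ ≤ M * τ ^ N * g τ)
    (hdbl : IsDoublingWeight Q g) {lam : ℂ} (hlam : 0 < lam.re) :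
    ‖∫ τ in Ioi (0 : ℝ), exp (-lam * τ) • f τ‖ ≤
      M * (2 / (N + min Q 1) + (⌈Q + N⌉₊ + 3) * 2 ^ Q) * ‖lam‖ ^ (-1 - N) * g (1 / ‖lam‖) := by
  have hlam0 : 0 < ‖lam‖ := norm_pos_iff.2 (ne_zero_of_re_pos hlam)
  have hr0 : 0 < 1 / ‖lam‖ := one_div_pos.2 hlam0
  set r := 1 / ‖lam‖ with hr
  have hnear : ∀ τ ∈ Ioc 0 r,
      ‖f τ‖ ≤ M * (2 * (r ^ N * g r)) * (τ / r) ^ (N + (min Q 1 - 1)) := fun τ ⟨hτ0, hτ⟩ =>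
    calc ‖f τ‖ ≤ M * (τ ^ N * g τ) := by simpa [mul_assoc] using hfg 0 (Nat.zero_le _) τ hτ0
      _ ≤ M * (2 * (r ^ N * g r) * (τ / r) ^ (N + (min Q 1 - 1))) :=
        mul_le_mul_of_nonneg_left (hdbl.rpow_mul_le_of_le hQ hg hτ0 hτ N) hM
      _ = _ := (mul_assoc _ _ _).symm
  have hfar : ∀ k ≤ ⌈Q + N⌉₊ + 2, ∀ τ ∈ Ici r, τ ^ k * ‖iteratedDeriv k f τ‖ ≤
      M * (2 ^ Q * (r ^ N * g r)) * (τ / r) ^ (N + Q) := fun k hk τ hτ =>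
    calc _ ≤ M * (τ ^ N * g τ) := (hfg k hk τ (hr0.trans_le hτ)).trans_eq (mul_assoc _ _ _)
      _ ≤ M * (2 ^ Q * (r ^ N * g r) * (τ / r) ^ (N + Q)) :=
        mul_le_mul_of_nonneg_left (hdbl.rpow_mul_le_of_ge hQ hr0 (hg r hr0) hτ N) hM
      _ = _ := (mul_assoc _ _ _).symm
  have hpow : ‖lam‖ ^ (-1 - N) = r ^ N * r := by
    rw [← Real.rpow_add_one hr0.ne', hr, one_div, Real.inv_rpow hlam0.le,
      ← Real.rpow_neg hlam0.le]
    ring_nf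
  refine (norm_integral_Ioi_zero_exp_neg_mul_smul_le hlam (by rw [hr, one_div]) hf (by linarith)
    ?_ hnear hfar).trans_eq ?_
  · push_cast
    linarith [Nat.le_ceil (Q + N)]
  · rw [hpow]
    push_cast
    ring

/-- Proposition 7.3: fix `Q, M > 0`, `N ≥ 0`. Let `g : [0,∞) → [0,∞)` and let
`f : [0,∞) → ℝ` be smooth with `τ^k |f^{(k)}(τ)| ≤ M τ^N g(τ)` for `0 ≤ k ≤ ⌈Q+N⌉+2`,
and suppose `g` is either increasing with `g(2τ) ≤ 2^Q g(τ)` or decreasing with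
`g(2τ) ≥ 2^{−1+Q} g(τ)`. Then there is `C = C(Q,M,N) > 0` such that for every
`λ = x + iy` with `x > 0`, `|∫_0^∞ e^{−λτ} f(τ) dτ| ≤ C |λ|^{−1−N} g(1/|λ|)`. -/
theorem statement15 (Q M N : ℝ) (hQ : 0 < Q) (hM : 0 < M) (hN : 0 ≤ N) :
    ∃ C : ℝ, 0 < C ∧ ∀ (f g : ℝ → ℝ),
      ContDiff ℝ (⊤ : ℕ∞) f →
      (∀ τ : ℝ, 0 ≤ τ → 0 ≤ g τ) →
      (∀ k : ℕ, k ≤ ⌈Q + N⌉₊ + 2 → ∀ τ : ℝ, 0 ≤ τ →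
        τ ^ k * |iteratedDeriv k f τ| ≤ M * τ ^ N * g τ) →
      (((∀ s t : ℝ, 0 ≤ s → s ≤ t → g s ≤ g t) ∧
          ∀ τ : ℝ, 0 ≤ τ → g (2 * τ) ≤ 2 ^ Q * g τ) ∨
        ((∀ s t : ℝ, 0 ≤ s → s ≤ t → g t ≤ g s) ∧
          ∀ τ : ℝ, 0 ≤ τ → 2 ^ (-1 + Q : ℝ) * g τ ≤ g (2 * τ))) →
      ∀ lam : ℂ, 0 < lam.re →
        ‖∫ τ in Set.Ioi (0 : ℝ), Complex.exp (-lam * (τ : ℂ)) * (f τ : ℂ)‖ ≤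
          C * ‖lam‖ ^ (-1 - N : ℝ) * g (1 / ‖lam‖) := by
  have hpos : 0 < N + min Q 1 := by positivity
  refine ⟨M * (2 / (N + min Q 1) + (⌈Q + N⌉₊ + 3) * 2 ^ Q), by positivity, ?_⟩
  intro f g hf hg hfg hdbl lam hlam
  refine statement15_general (f := fun τ => (f τ : ℂ)) hQ.le hM.le hpos
    (contDiff_infty.1 (ofRealCLM.contDiff.comp hf) _).contDiffOn
    (fun τ hτ => hg τ hτ.le) (fun k hk τ hτ => ?_) ?_ hlam
  · rw [norm_iteratedDeriv_ofReal_comp (contDiff_infty.1 hf k).contDiffAt]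
    exact hfg k hk τ hτ.le
  · exact hdbl.imp
      (.imp (fun h s hs t _ hst => h s t (le_of_lt hs) hst) fun h τ hτ => h τ hτ.le)
      (.imp (fun h s hs t _ hst => h s t (le_of_lt hs) hst) fun h τ hτ => h τ hτ.le)
end

section
/- There exist absolute constants 0 < c ≤ C < ∞ with the following property. Let φ : ℝ → ℝ be a convex function attaining its minimum value at some θ₀ ∈ ℝ, and suppose the set L = {θ ∈ ℝ : φ(θ) ≤ φ(θ₀) + 1} has finite Lebesgue measure |L|. Then c |L| e^{−φ(θ₀)} ≤ ∫_ℝ e^{−φ(θ)} dθ ≤ C |L| e^{−φ(θ₀)}. -/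
open MeasureTheory

/-! For a convex `φ` with minimum at `a` on a convex subset of a `d`-dimensional space, the
homothety of centre `a` and ratio `t ≥ 1` carries `L = {φ ≤ φ a + 1}` onto a set that contains
`{φ ≤ φ a + t}`, so the latter has measure at most `t ^ d |L|`. Integrating this growth bound
against `exp (-t)` in the layer-cake formula for `∫ exp (-φ)` gives the upper estimate, with
constant `1 + d!`. The lower estimate is Markov's inequality on `L`. -/

open Set Module

section LayerCake

variable {α : Type*} [MeasurableSpace α] {μ : Measure α} {f : α → ℝ}

lemma lintegral_exp_neg_Ici (c : ℝ) :
    ∫⁻ t in Ici c, ENNReal.ofReal (Real.exp (-t)) = ENNReal.ofReal (Real.exp (-c)) := by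
  rw [setLIntegral_congr Ioi_ae_eq_Ici.symm, ← integral_exp_neg_Ioi c,
    ofReal_integral_eq_lintegral_ofReal (integrableOn_exp_neg_Ioi c)
      (ae_of_all _ fun t ↦ (Real.exp_pos _).le)]

lemma lintegral_exp_neg_eq_lintegral_meas_le [SFinite μ] (hf : AEMeasurable f μ) :
    ∫⁻ x, ENNReal.ofReal (Real.exp (-f x)) ∂μ =
      ∫⁻ t, μ {x | f x ≤ t} * ENNReal.ofReal (Real.exp (-t)) := by
  let w : ℝ → ENNReal := fun t ↦ ENNReal.ofReal (Real.exp (-t))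
  have h_meas : AEMeasurable (fun p : α × ℝ ↦ {q : α × ℝ | f q.1 ≤ q.2}.indicator
      (fun q ↦ w q.2) p) (μ.prod volume) :=
    AEMeasurable.indicator₀ (by fun_prop)
      (nullMeasurableSet_le hf.comp_fst measurable_snd.aemeasurable)
  calc ∫⁻ x, w (f x) ∂μ
      = ∫⁻ x, ∫⁻ t, (Ici (f x)).indicator w t ∂volume ∂μ := by
        simp only [lintegral_indicator measurableSet_Ici, w, lintegral_exp_neg_Ici]
    _ = ∫⁻ t, ∫⁻ x, {x | f x ≤ t}.indicator (fun _ ↦ w t) x ∂μ :=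
        lintegral_lintegral_swap h_meas
    _ = ∫⁻ t, μ {x | f x ≤ t} * w t := by
        refine lintegral_congr fun t ↦ ?_
        rw [lintegral_indicator_const₀ (nullMeasurableSet_le hf aemeasurable_const), mul_comm]

lemma exp_neg_mul_measureReal_le_le_integral (hf : Integrable (fun x ↦ Real.exp (-f x)) μ)
    (c : ℝ) : Real.exp (-c) * μ.real {x | f x ≤ c} ≤ ∫ x, Real.exp (-f x) ∂μ := by
  simpa only [Real.exp_le_exp, neg_le_neg_iff] using
    mul_meas_ge_le_integral_of_nonneg (ae_of_all μ fun x ↦ (Real.exp_pos (-f x)).le) hf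
      (Real.exp (-c))

end LayerCake

lemma lintegral_pow_mul_exp_neg_Ici (n : ℕ) :
    ∫⁻ t in Ici (0 : ℝ), ENNReal.ofReal (t ^ n * Real.exp (-t)) = n.factorial := by
  have h_gamma : ∀ t : ℝ, t ^ n * Real.exp (-t) = Real.exp (-t) * t ^ ((n + 1 : ℝ) - 1) :=
    fun t ↦ by rw [add_sub_cancel_right, Real.rpow_natCast, mul_comm]
  have hn : (0 : ℝ) < n + 1 := by positivity
  have h_nonneg : ∀ᵐ t ∂volume.restrict (Ioi (0 : ℝ)),
      0 ≤ Real.exp (-t) * t ^ ((n + 1 : ℝ) - 1) :=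
    ae_restrict_of_forall_mem measurableSet_Ioi fun t (ht : 0 < t) ↦ by positivity
  simp only [h_gamma]
  rw [setLIntegral_congr Ioi_ae_eq_Ici.symm,
    ← ofReal_integral_eq_lintegral_ofReal (Real.GammaIntegral_convergent hn) h_nonneg,
    ← Real.Gamma_eq_integral hn, Real.Gamma_nat_eq_factorial, ENNReal.ofReal_natCast]

lemma lintegral_one_add_pow_mul_exp_neg_Ici (n : ℕ) :
    ∫⁻ t in Ici (0 : ℝ), ENNReal.ofReal (1 + t ^ n) * ENNReal.ofReal (Real.exp (-t)) =
      1 + n.factorial := by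
  calc ∫⁻ t in Ici (0 : ℝ), ENNReal.ofReal (1 + t ^ n) * ENNReal.ofReal (Real.exp (-t))
      = ∫⁻ t in Ici (0 : ℝ), (ENNReal.ofReal (t ^ 0 * Real.exp (-t)) +
          ENNReal.ofReal (t ^ n * Real.exp (-t))) := by
        refine setLIntegral_congr_fun measurableSet_Ici fun t (ht : 0 ≤ t) ↦ ?_
        rw [← ENNReal.ofReal_mul (by positivity),
          ← ENNReal.ofReal_add (by positivity) (by positivity), pow_zero, add_mul]
    _ = 1 + n.factorial := by
        rw [lintegral_add_left (by fun_prop), lintegral_pow_mul_exp_neg_Ici,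
          lintegral_pow_mul_exp_neg_Ici, Nat.factorial_zero, Nat.cast_one]

lemma sublevel_subset_image_homothety {E : Type*} [AddCommGroup E] [Module ℝ E] {s : Set E}
    {φ : E → ℝ} (hφ : ConvexOn ℝ s φ) {a : E} (ha : a ∈ s) (r : ℝ) {t : ℝ} (ht : 1 ≤ t) :
    {x ∈ s | φ x ≤ φ a + t * r} ⊆ AffineMap.homothety a t '' {x ∈ s | φ x ≤ φ a + r} := by
  rintro x ⟨hxs, hx⟩
  have ht₀ : 0 < t := by linarith
  have ht₁ : 0 ≤ 1 - t⁻¹ := sub_nonneg.2 (inv_le_one_of_one_le₀ ht)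
  have h_sum : 1 - t⁻¹ + t⁻¹ = 1 := sub_add_cancel 1 t⁻¹
  have h_inv : AffineMap.homothety a t⁻¹ x = (1 - t⁻¹) • a + t⁻¹ • x := by
    rw [AffineMap.homothety_eq_lineMap, AffineMap.lineMap_apply_module]
  refine ⟨AffineMap.homothety a t⁻¹ x, ⟨?_, ?_⟩, ?_⟩
  · rw [h_inv]
    exact hφ.1 ha hxs ht₁ (by positivity) h_sum
  · calc φ (AffineMap.homothety a t⁻¹ x)
        ≤ (1 - t⁻¹) * φ a + t⁻¹ * φ x := by
          rw [h_inv]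
          exact hφ.2 ha hxs ht₁ (by positivity) h_sum
      _ ≤ (1 - t⁻¹) * φ a + t⁻¹ * (φ a + t * r) := by gcongr
      _ = φ a + r := by field_simp; ring
  · rw [← AffineMap.homothety_mul_apply, mul_inv_cancel₀ ht₀.ne', AffineMap.homothety_one,
      AffineMap.id_apply]

section FiniteDimensional

variable {E : Type*} [NormedAddCommGroup E] [NormedSpace ℝ E] [FiniteDimensional ℝ E]
  [MeasurableSpace E] [BorelSpace E] {μ : Measure E} [μ.IsAddHaarMeasure]
  {s : Set E} {φ : E → ℝ} {a : E}

lemma aemeasurable_restrict_of_convexOn (hφ : ConvexOn ℝ s φ) :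
    AEMeasurable φ (μ.restrict s) := by
  have h_interior : interior s =ᵐ[μ] s :=
    interior_ae_eq_of_null_frontier (hφ.1.addHaar_frontier μ)
  rw [← Measure.restrict_congr_set h_interior]
  exact hφ.continuousOn_interior.aemeasurable isOpen_interior.measurableSet

lemma restrict_apply_setOf_le (hs : Convex ℝ s) (c : ℝ) :
    μ.restrict s {x | φ x ≤ c} = μ {x ∈ s | φ x ≤ c} := by
  rw [Measure.restrict_apply₀' (hs.nullMeasurableSet μ), inter_comm]
  rfl

lemma measure_sublevel_add_le (hφ : ConvexOn ℝ s φ) (ha : a ∈ s) {t : ℝ} (ht : 0 ≤ t) :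
    μ {x ∈ s | φ x ≤ φ a + t} ≤
      ENNReal.ofReal (1 + t ^ finrank ℝ E) * μ {x ∈ s | φ x ≤ φ a + 1} := by
  rcases le_total t 1 with ht₁ | ht₁
  · calc μ {x ∈ s | φ x ≤ φ a + t}
        ≤ μ {x ∈ s | φ x ≤ φ a + 1} :=
          measure_mono fun x ⟨hxs, hx⟩ ↦ ⟨hxs, hx.trans (by gcongr)⟩
      _ ≤ ENNReal.ofReal (1 + t ^ finrank ℝ E) * μ {x ∈ s | φ x ≤ φ a + 1} :=
          le_mul_of_one_le_left' (ENNReal.one_le_ofReal.2 (le_add_of_nonneg_right (by positivity)))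
  · calc μ {x ∈ s | φ x ≤ φ a + t}
        ≤ μ (AffineMap.homothety a t '' {x ∈ s | φ x ≤ φ a + 1}) := by
          simpa only [mul_one] using
            measure_mono (μ := μ) (sublevel_subset_image_homothety hφ ha 1 ht₁)
      _ = ENNReal.ofReal (t ^ finrank ℝ E) * μ {x ∈ s | φ x ≤ φ a + 1} := by
          rw [Measure.addHaar_image_homothety, abs_of_nonneg (by positivity)]
      _ ≤ ENNReal.ofReal (1 + t ^ finrank ℝ E) * μ {x ∈ s | φ x ≤ φ a + 1} := by
          gcongr
          exact le_add_of_nonneg_left zero_le_one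

lemma setLIntegral_exp_neg_le (hφ : ConvexOn ℝ s φ) (ha : a ∈ s) (hmin : IsMinOn φ s a) :
    ∫⁻ x in s, ENNReal.ofReal (Real.exp (-φ x)) ∂μ ≤
      (1 + (finrank ℝ E).factorial) *
        (μ {x ∈ s | φ x ≤ φ a + 1} * ENNReal.ofReal (Real.exp (-φ a))) := by
  set L : Set E := {x ∈ s | φ x ≤ φ a + 1}
  let g : ℝ → ENNReal := fun t ↦
    ENNReal.ofReal (1 + t ^ finrank ℝ E) * ENNReal.ofReal (Real.exp (-t))
  have h_layer : ∀ t, μ {x ∈ s | φ x ≤ φ a + t} * ENNReal.ofReal (Real.exp (-(φ a + t))) ≤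
      (Ici 0).indicator (fun t ↦ g t * (μ L * ENNReal.ofReal (Real.exp (-φ a)))) t := by
    intro t
    rcases lt_or_ge t 0 with ht | ht
    · have h_empty : {x ∈ s | φ x ≤ φ a + t} = ∅ :=
        eq_empty_of_forall_notMem fun x ⟨hxs, hx⟩ ↦ by linarith [isMinOn_iff.1 hmin x hxs]
      simp [h_empty]
    · rw [indicator_of_mem (mem_Ici.2 ht), neg_add, Real.exp_add,
        ENNReal.ofReal_mul (Real.exp_pos _).le]
      calc _ ≤ ENNReal.ofReal (1 + t ^ finrank ℝ E) * μ L *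
            (ENNReal.ofReal (Real.exp (-φ a)) * ENNReal.ofReal (Real.exp (-t))) := by
            gcongr
            exact measure_sublevel_add_le hφ ha ht
        _ = g t * (μ L * ENNReal.ofReal (Real.exp (-φ a))) := by ring
  calc ∫⁻ x in s, ENNReal.ofReal (Real.exp (-φ x)) ∂μ
      = ∫⁻ t, μ {x ∈ s | φ x ≤ t} * ENNReal.ofReal (Real.exp (-t)) := by
        rw [lintegral_exp_neg_eq_lintegral_meas_le (aemeasurable_restrict_of_convexOn hφ)]
        simp only [restrict_apply_setOf_le hφ.1]
    _ = ∫⁻ t, μ {x ∈ s | φ x ≤ φ a + t} * ENNReal.ofReal (Real.exp (-(φ a + t))) :=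
        (lintegral_add_left_eq_self _ (φ a)).symm
    _ ≤ ∫⁻ t in Ici 0, g t * (μ L * ENNReal.ofReal (Real.exp (-φ a))) := by
        rw [← lintegral_indicator measurableSet_Ici]
        exact lintegral_mono h_layer
    _ = (1 + (finrank ℝ E).factorial) * (μ L * ENNReal.ofReal (Real.exp (-φ a))) := by
        rw [lintegral_mul_const _ (by fun_prop), lintegral_one_add_pow_mul_exp_neg_Ici]

lemma integrableOn_exp_neg_of_convexOn (hφ : ConvexOn ℝ s φ) (ha : a ∈ s) (hmin : IsMinOn φ s a)
    (hfin : μ {x ∈ s | φ x ≤ φ a + 1} ≠ ⊤) :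
    IntegrableOn (fun x ↦ Real.exp (-φ x)) s μ := by
  have h_meas : AEMeasurable φ (μ.restrict s) := aemeasurable_restrict_of_convexOn hφ
  refine (lintegral_ofReal_ne_top_iff_integrable h_meas.neg.exp.aestronglyMeasurable
    (ae_of_all _ fun x ↦ (Real.exp_pos _).le)).1 ?_
  exact ne_top_of_le_ne_top (by finiteness) (setLIntegral_exp_neg_le hφ ha hmin)

theorem statement16_general (hφ : ConvexOn ℝ s φ) (ha : a ∈ s) (hmin : IsMinOn φ s a)
    (hfin : μ {x ∈ s | φ x ≤ φ a + 1} ≠ ⊤) :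
    Real.exp (-1) * (μ.real {x ∈ s | φ x ≤ φ a + 1} * Real.exp (-φ a)) ≤
        ∫ x in s, Real.exp (-φ x) ∂μ ∧
      ∫ x in s, Real.exp (-φ x) ∂μ ≤
        (1 + (finrank ℝ E).factorial) *
          (μ.real {x ∈ s | φ x ≤ φ a + 1} * Real.exp (-φ a)) := by
  have h_int : IntegrableOn (fun x ↦ Real.exp (-φ x)) s μ :=
    integrableOn_exp_neg_of_convexOn hφ ha hmin hfin
  constructor
  · calc Real.exp (-1) * (μ.real {x ∈ s | φ x ≤ φ a + 1} * Real.exp (-φ a))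
        = Real.exp (-(φ a + 1)) * (μ.restrict s).real {x | φ x ≤ φ a + 1} := by
          rw [measureReal_def, measureReal_def, restrict_apply_setOf_le hφ.1, neg_add,
            Real.exp_add]
          ring
      _ ≤ ∫ x in s, Real.exp (-φ x) ∂μ := exp_neg_mul_measureReal_le_le_integral h_int _
  · have h_const : (1 + (finrank ℝ E).factorial : ENNReal).toReal =
        1 + (finrank ℝ E).factorial := by
      exact_mod_cast ENNReal.toReal_natCast (1 + (finrank ℝ E).factorial)
    have h_upper := setLIntegral_exp_neg_le (μ := μ) hφ ha hmin
    rw [← ofReal_integral_eq_lintegral_ofReal h_int (ae_of_all _ fun x ↦ (Real.exp_pos _).le),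
      ENNReal.ofReal_le_iff_le_toReal (by finiteness), ENNReal.toReal_mul, ENNReal.toReal_mul,
      ENNReal.toReal_ofReal (Real.exp_pos _).le, h_const] at h_upper
    exact h_upper

end FiniteDimensional

/-- Proposition 9.1: there are absolute constants `0 < c ≤ C` such that for every convex
`φ : ℝ → ℝ` attaining its minimum at `θ₀`, with `L = {θ : φ(θ) ≤ φ(θ₀) + 1}` of finite
Lebesgue measure, one has `c |L| e^{−φ(θ₀)} ≤ ∫_ℝ e^{−φ(θ)} dθ ≤ C |L| e^{−φ(θ₀)}`. -/
theorem statement16 :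
    ∃ c C : ℝ, 0 < c ∧ c ≤ C ∧
      ∀ φ : ℝ → ℝ, ConvexOn ℝ Set.univ φ →
        ∀ θ₀ : ℝ, (∀ θ : ℝ, φ θ₀ ≤ φ θ) →
          volume {θ : ℝ | φ θ ≤ φ θ₀ + 1} ≠ ⊤ →
          c * ((volume {θ : ℝ | φ θ ≤ φ θ₀ + 1}).toReal * Real.exp (-φ θ₀)) ≤
              (∫ θ : ℝ, Real.exp (-φ θ)) ∧
            (∫ θ : ℝ, Real.exp (-φ θ)) ≤
              C * ((volume {θ : ℝ | φ θ ≤ φ θ₀ + 1}).toReal * Real.exp (-φ θ₀)) := by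
  refine ⟨Real.exp (-1), 1 + (finrank ℝ ℝ).factorial, Real.exp_pos _, ?_,
    fun φ hφ θ₀ hmin hfin ↦ ?_⟩
  · exact (Real.exp_le_one_iff.2 (by norm_num)).trans (le_add_of_nonneg_right (by positivity))
  · simpa [measureReal_def] using
      statement16_general hφ (mem_univ θ₀) (isMinOn_univ_iff.2 hmin) (by simpa using hfin)
end

section
/- Let P : ℂ → ℝ be smooth and subharmonic, and let Ω = {(z, z₂) ∈ ℂ² : Im z₂ > P(z)}. Let F be holomorphic on Ω with ∫_Ω |F|² dm < ∞, where dm is Lebesgue measure on ℂ² ≅ ℝ⁴. Then for every ε₀ > 0, ∫_{ℂ×ℝ} |F(z, t + i(P(z)+ε₀))|² dm(z,t) ≤ ε₀^{−1} ∫_Ω |F|² dm, where dm(z,t) is Lebesgue measure on ℂ × ℝ ≅ ℝ³. -/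
open MeasureTheory Complex

/-- The Laplacian of a function `P : ℂ → ℝ`, as the sum of the two pure second
partial derivatives in the directions `1` and `I`. -/
noncomputable def laplacian (P : ℂ → ℝ) (z : ℂ) : ℝ :=
  iteratedFDeriv ℝ 2 P z ![1, 1] + iteratedFDeriv ℝ 2 P z ![Complex.I, Complex.I]

/-!
A disc of radius `ε₀` centred at a point of the line `Im w = P z + ε₀` lies in the slice
`{w | P z < Im w}` of `Ω` over `z`. By the mean value property and Jensen's inequality,
`π ε₀² |F(z, t + i(P z + ε₀))|²` is at most the integral of `|F(z, ·)|²` over that disc. As `t` runs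
over `ℝ`, a point `w` lies in such discs only for `t` in an interval of length `2ε₀`, so integrating
in `t` gives at most `2ε₀` times the integral over the slice. Since `2 / (π ε₀) ≤ 1 / ε₀`,
integrating in `z` concludes.

The mean value inequality on a disc follows from the one on circles without polar coordinates: the
integral over the disc is invariant under rotation about its centre, so the integrand may be
replaced by its average over all rotations.
-/

section

open Metric Set
open scoped ENNReal Real

variable {X E : Type*} [MeasurableSpace X] [NormedAddCommGroup E]

lemma rpow_lintegral_le_lintegral_rpow {μ : Measure X} [IsProbabilityMeasure μ] {f : X → ℝ≥0∞}
    (hf : AEMeasurable f μ) {p : ℝ} (hp : 1 ≤ p) :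
    (∫⁻ x, f x ∂μ) ^ p ≤ ∫⁻ x, f x ^ p ∂μ := by
  have hp₀ : 0 < p := one_pos.trans_le hp
  have h := eLpNorm'_le_eLpNorm'_of_exponent_le one_pos hp μ hf.aestronglyMeasurable
  simpa only [eLpNorm'_eq_lintegral_enorm, enorm_eq_self, ENNReal.rpow_one, div_one, one_div,
    ENNReal.le_rpow_inv_iff hp₀] using h

section MeanValue

variable [NormedSpace ℂ E] [CompleteSpace E] {f : ℂ → E} {c : ℂ} {R : ℝ}

lemma enorm_le_laverage_circle (hf : DifferentiableOn ℂ f (ball c R)) {w : ℂ}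
    (hw : w ∈ ball 0 R) :
    ‖f c‖ₑ ≤ ⨍⁻ θ, ‖f (c + Circle.exp θ * w)‖ₑ ∂volume.restrict (Ioc 0 (2 * π)) := by
  have hmaps : MapsTo (fun ζ => c + ζ * w) (closedBall 0 1) (ball c R) := fun ζ hζ => by
    rw [mem_closedBall_zero_iff] at hζ
    rw [mem_ball_zero_iff] at hw
    rw [mem_ball_iff_norm, add_sub_cancel_left, norm_mul]
    exact (mul_le_of_le_one_left (norm_nonneg w) hζ).trans_lt hw
  have hdiff : DiffContOnCl ℂ (fun ζ => f (c + ζ * w)) (ball 0 |1|) := by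
    rw [abs_one]
    exact (hf.comp (by fun_prop) hmaps).diffContOnCl_ball subset_rfl
  have hmean := hdiff.circleAverage
  rw [zero_mul, add_zero, Real.circleAverage_eq_intervalAverage,
    uIoc_of_le Real.two_pi_pos.le] at hmean
  simp only [circleMap_zero, ofReal_one, one_mul, ← Circle.coe_exp] at hmean
  rw [← hmean]
  exact enorm_integral_le_lintegral_enorm _

lemma setLIntegral_ball_comp_rotation (g : ℂ → ℝ≥0∞) (c : ℂ) (R : ℝ) (a : Circle) :
    ∫⁻ w in ball 0 R, g (c + a * w) = ∫⁻ w in ball c R, g w := by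
  have he : MeasurePreserving fun w : ℂ => c + a * w :=
    (measurePreserving_add_left volume c).comp (rotation a).measurePreserving
  have hemb : MeasurableEmbedding fun w : ℂ => c + a * w :=
    (measurableEmbedding_addLeft c).comp (rotation a).toMeasurableEquiv.measurableEmbedding
  have hpre : (fun w : ℂ => c + a * w) ⁻¹' ball c R = ball 0 R := by
    ext w
    simp [Circle.norm_coe a]
  rw [← he.setLIntegral_comp_preimage_emb hemb g (ball c R), hpre]

lemma setLIntegral_ball_laverage_circle {g : ℂ → ℝ≥0∞} (hg : Measurable g) (c : ℂ) (R : ℝ) :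
    ∫⁻ w in ball 0 R, ⨍⁻ θ, g (c + Circle.exp θ * w) ∂volume.restrict (Ioc 0 (2 * π)) =
      ∫⁻ w in ball c R, g w := by
  have : NeZero (volume.restrict (Ioc 0 (2 * π))) := ⟨by simp [Real.pi_pos]⟩
  simp_rw [laverage_eq']
  rw [lintegral_lintegral_swap (by fun_prop), ← laverage_eq']
  simp_rw [setLIntegral_ball_comp_rotation, laverage_const]

lemma enorm_le_laverage_ball (hR : 0 < R) (hf : DifferentiableOn ℂ f (ball c R)) :
    ‖f c‖ₑ ≤ ⨍⁻ w, ‖f w‖ₑ ∂volume.restrict (ball c R) := by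
  classical
  let g : ℂ → ℝ≥0∞ := (ball c R).piecewise (fun w => ‖f w‖ₑ) 0
  have hg : Measurable g :=
    hf.continuousOn.enorm.measurable_piecewise continuousOn_const measurableSet_ball
  have hfg : EqOn g (fun w => ‖f w‖ₑ) (ball c R) := piecewise_eqOn _ _ _
  rw [setLAverage_eq, ENNReal.le_div_iff_mul_le (.inl (measure_ball_pos volume c hR).ne')
    (.inl measure_ball_lt_top.ne)]
  calc ‖f c‖ₑ * volume (ball c R) = ∫⁻ _w in ball (0 : ℂ) R, ‖f c‖ₑ := by
        rw [setLIntegral_const, Measure.addHaar_ball_center]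
    _ ≤ ∫⁻ w in ball 0 R, ⨍⁻ θ, g (c + Circle.exp θ * w) ∂volume.restrict (Ioc 0 (2 * π)) := by
        refine setLIntegral_mono' measurableSet_ball fun w hw => ?_
        refine (enorm_le_laverage_circle hf hw).trans_eq (lintegral_congr fun θ => ?_)
        exact (hfg (by simpa using hw)).symm
    _ = ∫⁻ w in ball c R, g w := setLIntegral_ball_laverage_circle hg c R
    _ = ∫⁻ w in ball c R, ‖f w‖ₑ := setLIntegral_congr_fun measurableSet_ball hfg

lemma enorm_rpow_le_laverage_ball (hR : 0 < R) (hf : DifferentiableOn ℂ f (ball c R)) {p : ℝ}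
    (hp : 1 ≤ p) : ‖f c‖ₑ ^ p ≤ ⨍⁻ w, ‖f w‖ₑ ^ p ∂volume.restrict (ball c R) := by
  have : NeZero (volume.restrict (ball c R)) :=
    ⟨Measure.restrict_eq_zero.not.2 (measure_ball_pos volume c hR).ne'⟩
  have : IsFiniteMeasure (volume.restrict (ball c R)) :=
    isFiniteMeasure_restrict.2 measure_ball_lt_top.ne
  have hmeas : AEMeasurable (fun w => ‖f w‖ₑ) (volume.restrict (ball c R)) :=
    hf.continuousOn.enorm.aemeasurable measurableSet_ball
  calc ‖f c‖ₑ ^ p ≤ (⨍⁻ w, ‖f w‖ₑ ∂volume.restrict (ball c R)) ^ p := by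
        gcongr
        exact enorm_le_laverage_ball hR hf
    _ ≤ ⨍⁻ w, ‖f w‖ₑ ^ p ∂volume.restrict (ball c R) :=
        rpow_lintegral_le_lintegral_rpow (hmeas.smul_measure _) hp

end MeanValue

lemma lintegral_setLIntegral_preimage_ball {G : Type*} [NormedAddCommGroup G] [MeasurableSpace G]
    [BorelSpace G] [SecondCountableTopology G] (μ : Measure G) [μ.IsAddHaarMeasure] [SFinite μ]
    {ν : Measure X} [SFinite ν] {u : X → G} (hu : Measurable u) {g : X → ℝ≥0∞}
    (hg : AEMeasurable g ν) (r : ℝ) :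
    ∫⁻ t, ∫⁻ x in u ⁻¹' ball t r, g x ∂ν ∂μ = μ (ball 0 r) * ∫⁻ x, g x ∂ν := by
  have hS : MeasurableSet {q : G × X | u q.2 ∈ ball q.1 r} :=
    measurableSet_lt (f := fun q : G × X => dist (u q.2) q.1) (by fun_prop) measurable_const
  calc ∫⁻ t, ∫⁻ x in u ⁻¹' ball t r, g x ∂ν ∂μ
      = ∫⁻ t, ∫⁻ x, {q : G × X | u q.2 ∈ ball q.1 r}.indicator (fun q => g q.2) (t, x) ∂ν ∂μ := by
        simp_rw [← lintegral_indicator (hu measurableSet_ball)]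
        rfl
    _ = ∫⁻ x, ∫⁻ t, {q : G × X | u q.2 ∈ ball q.1 r}.indicator (fun q => g q.2) (t, x) ∂μ ∂ν :=
        lintegral_lintegral_swap (hg.comp_snd.indicator hS)
    _ = ∫⁻ x, μ (ball 0 r) * g x ∂ν := by
        refine lintegral_congr fun x => ?_
        rw [← Measure.addHaar_ball_center μ (u x), mul_comm,
          ← lintegral_indicator_const measurableSet_ball]
        simp only [indicator, mem_ofPred_eq, mem_ball, dist_comm (u x)]
    _ = μ (ball 0 r) * ∫⁻ x, g x ∂ν := lintegral_const_mul'' _ hg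

lemma ball_subset_reProdIm (z : ℂ) (r : ℝ) : ball z r ⊆ ball z.re r ×ℂ ball z.im r := by
  intro w hw
  rw [mem_ball_iff_norm] at hw
  rw [mem_reProdIm, mem_ball_iff_norm, mem_ball_iff_norm, ← sub_re, ← sub_im]
  exact ⟨(abs_re_le_norm _).trans_lt hw, (abs_im_le_norm _).trans_lt hw⟩

variable [NormedSpace ℂ E] [CompleteSpace E] {p : ℝ}

lemma lintegral_horizontal_line_le_strip {f : ℂ → E} {y ε : ℝ} (hε : 0 < ε)
    (hf : DifferentiableOn ℂ f (im ⁻¹' ball y ε)) (hp : 1 ≤ p) :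
    ∫⁻ t : ℝ, ‖f (t + y * I)‖ₑ ^ p ≤
      ENNReal.ofReal (2 / (π * ε)) * ∫⁻ w in im ⁻¹' ball y ε, ‖f w‖ₑ ^ p := by
  have hdisc (t : ℝ) : ball (t + y * I) ε ⊆ re ⁻¹' ball t ε ∩ im ⁻¹' ball y ε := by
    simpa [reProdIm] using ball_subset_reProdIm (t + y * I) ε
  have hstrip : MeasurableSet (im ⁻¹' ball y ε) := measurable_im measurableSet_ball
  have hmeas : AEMeasurable (fun w => ‖f w‖ₑ ^ p) (volume.restrict (im ⁻¹' ball y ε)) :=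
    (hf.continuousOn.enorm.aemeasurable hstrip).pow_const p
  have hvol (z : ℂ) : volume (ball z ε) = ENNReal.ofReal (π * ε ^ 2) := by
    rw [volume_ball, ENNReal.ofReal_mul Real.pi_nonneg, ENNReal.ofReal_pow hε.le, mul_comm,
      ← NNReal.coe_real_pi, ENNReal.ofReal_coe_nnreal]
  have hpoint (t : ℝ) : ‖f (t + y * I)‖ₑ ^ p ≤ ENNReal.ofReal (π * ε ^ 2)⁻¹ *
      ∫⁻ w in re ⁻¹' ball t ε, ‖f w‖ₑ ^ p ∂volume.restrict (im ⁻¹' ball y ε) := by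
    rw [Measure.restrict_restrict (measurable_re measurableSet_ball)]
    refine (enorm_rpow_le_laverage_ball hε (hf.mono ((hdisc t).trans inter_subset_right))
      hp).trans ?_
    rw [setLAverage_eq, hvol, div_eq_mul_inv, mul_comm,
      ← ENNReal.ofReal_inv_of_pos (by positivity)]
    gcongr
    exact hdisc t
  calc ∫⁻ t : ℝ, ‖f (t + y * I)‖ₑ ^ p
      ≤ ENNReal.ofReal (π * ε ^ 2)⁻¹ * ∫⁻ t : ℝ, ∫⁻ w in re ⁻¹' ball t ε,
          ‖f w‖ₑ ^ p ∂volume.restrict (im ⁻¹' ball y ε) := by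
        rw [← lintegral_const_mul' _ _ ENNReal.ofReal_ne_top]
        exact lintegral_mono hpoint
    _ = ENNReal.ofReal (2 / (π * ε)) * ∫⁻ w in im ⁻¹' ball y ε, ‖f w‖ₑ ^ p := by
        rw [lintegral_setLIntegral_preimage_ball volume measurable_re hmeas, Real.volume_ball,
          ← mul_assoc, ← ENNReal.ofReal_mul (by positivity)]
        congr 2
        field_simp

lemma lintegral_horizontal_line_le_halfPlane {f : ℂ → E} {a ε : ℝ} (hε : 0 < ε)
    (hf : DifferentiableOn ℂ f {w | a < w.im}) (hp : 1 ≤ p) :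
    ∫⁻ t : ℝ, ‖f (t + (a + ε : ℝ) * I)‖ₑ ^ p ≤
      ENNReal.ofReal ε⁻¹ * ∫⁻ w in {w | a < w.im}, ‖f w‖ₑ ^ p := by
  have hstrip : im ⁻¹' ball (a + ε) ε ⊆ {w | a < w.im} := fun w hw => by
    rw [mem_preimage, Real.ball_eq_Ioo, add_sub_cancel_right] at hw
    exact hw.1
  have hconst : 2 / (π * ε) ≤ ε⁻¹ := by
    rw [← div_div, div_eq_mul_inv]
    exact mul_le_of_le_one_left (by positivity) ((div_le_one Real.pi_pos).2 Real.two_le_pi)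
  refine (lintegral_horizontal_line_le_strip hε (hf.mono hstrip) hp).trans ?_
  gcongr

theorem statement18_general {μ : Measure X} {P : X → ℝ} (hP : Measurable P)
    {F : X × ℂ → E}
    (hFmeas : AEStronglyMeasurable F ((μ.prod volume).restrict {q | P q.1 < q.2.im}))
    (hF : ∀ x, DifferentiableOn ℂ (fun w => F (x, w)) {w | P x < w.im})
    (hp : 1 ≤ p) {ε : ℝ} (hε : 0 < ε) :
    ∫⁻ q : X × ℝ, ‖F (q.1, q.2 + (P q.1 + ε : ℝ) * I)‖ₑ ^ p ∂μ.prod volume ≤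
      ENNReal.ofReal ε⁻¹ * ∫⁻ q in {q | P q.1 < q.2.im}, ‖F q‖ₑ ^ p ∂μ.prod volume := by
  have hΩ : MeasurableSet {q : X × ℂ | P q.1 < q.2.im} :=
    measurableSet_lt (by fun_prop) (by fun_prop)
  have hslice (x : X) : MeasurableSet {w : ℂ | P x < w.im} :=
    measurableSet_lt measurable_const measurable_im
  calc ∫⁻ q : X × ℝ, ‖F (q.1, q.2 + (P q.1 + ε : ℝ) * I)‖ₑ ^ p ∂μ.prod volume
      ≤ ∫⁻ x, (∫⁻ t : ℝ, ‖F (x, t + (P x + ε : ℝ) * I)‖ₑ ^ p) ∂μ := lintegral_prod_le _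
    _ ≤ ∫⁻ x, (ENNReal.ofReal ε⁻¹ * ∫⁻ w in {w | P x < w.im}, ‖F (x, w)‖ₑ ^ p) ∂μ :=
        lintegral_mono fun x => lintegral_horizontal_line_le_halfPlane hε (hF x) hp
    _ = ENNReal.ofReal ε⁻¹ * ∫⁻ q in {q | P q.1 < q.2.im}, ‖F q‖ₑ ^ p ∂μ.prod volume := by
        rw [lintegral_const_mul' _ _ ENNReal.ofReal_ne_top, ← lintegral_indicator hΩ,
          lintegral_prod _ ((aemeasurable_indicator_iff hΩ).2 (hFmeas.enorm.pow_const p))]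
        simp_rw [← lintegral_indicator (hslice _)]
        rfl

end

/-- Proposition B.3(i): let `P : ℂ → ℝ` be smooth and subharmonic,
`Ω = {(z,z₂) : Im z₂ > P(z)}`, and let `F` be holomorphic on `Ω` and square-integrable
on `Ω`. Then for every `ε₀ > 0`,
`∫_{ℂ×ℝ} |F(z, t + i(P(z)+ε₀))|² dm(z,t) ≤ ε₀⁻¹ ∫_Ω |F|² dm`. -/
theorem statement18 (P : ℂ → ℝ) (hP : ContDiff ℝ (⊤ : ℕ∞) P)
    (hsub : ∀ z : ℂ, 0 ≤ laplacian P z)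
    (F : ℂ × ℂ → ℂ)
    (hF : DifferentiableOn ℂ F {p : ℂ × ℂ | P p.1 < p.2.im})
    (hL2 : (∫⁻ p in {p : ℂ × ℂ | P p.1 < p.2.im},
      ENNReal.ofReal (‖F p‖ ^ 2)) < ⊤)
    (ε₀ : ℝ) (hε₀ : 0 < ε₀) :
    (∫⁻ q : ℂ × ℝ,
        ENNReal.ofReal (‖F (q.1, (q.2 : ℂ) + (P q.1 + ε₀ : ℝ) * Complex.I)‖ ^ 2)) ≤
      ENNReal.ofReal ε₀⁻¹ *
        ∫⁻ p in {p : ℂ × ℂ | P p.1 < p.2.im}, ENNReal.ofReal (‖F p‖ ^ 2) := by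
  have hmeas := hF.continuousOn.aestronglyMeasurable (μ := volume)
    (measurableSet_lt (hP.continuous.measurable.comp measurable_fst)
      (measurable_im.comp measurable_snd))
  simpa [ENNReal.ofReal_pow, ← Measure.volume_eq_prod] using
    statement18_general hP.continuous.measurable hmeas
      (fun z => hF.comp (by fun_prop) fun _ hw => hw) one_le_two hε₀
end

section
/- Let P : ℂ → ℝ be smooth, subharmonic and non-harmonic, and let Ω = {(z, z₂) ∈ ℂ² : Im z₂ > P(z)}. Let F be holomorphic on Ω with ‖F‖²_{H²(Ω)} := sup_{ε>0} ∫_{ℂ×ℝ} |F(z, t + i(P(z)+ε))|² dm(z,t) < ∞. Then for every ε₀ > 0, ∫_Ω |(∂F/∂z₂)(z, z₂ + iε₀)|² dm(z, z₂) ≤ (1/(4e)) ε₀^{−1} ‖F‖²_{H²(Ω)}, where ∂F/∂z₂ denotes the complex derivative of F in the second coordinate and dm is Lebesgue measure on ℂ² ≅ ℝ⁴. -/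
open MeasureTheory Complex

/-!
After the shear `w ↦ w + i P(x)` the function `F` becomes a family `G` of holomorphic functions on
the upper half-plane, and its restrictions `G_y` to the lines `Im w = y` are vectors of `L²(X × ℝ)`
with `‖G_y‖² ≤ N`. Moving the contour in `∫ G_s · conj G_{a+b-s}`, whose integrand is holomorphic
in `w = t + i s`, gives `⟪G_a, G_b⟫ = ‖G_{(a+b)/2}‖²`.

Hence along `u_j = G_{y+jk}` the numbers `a_j = ‖u_j‖²` are log-convex (Cauchy-Schwarz), and
`‖u_{j+2} - u_j‖²` is their second difference `a_j - 2 a_{j+1} + a_{j+2}`. Being bounded, `a` is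
decreasing, so the second differences from index `m` on sum to at most `a_m - a_{m+1}`. With
`r = a_{m+1} / a_m ≤ 1`, log-convexity gives `a_m ≤ r^m a_0`, so
`m (a_m - a_{m+1}) ≤ m (1 - r) r^m a_0 ≤ a_0 / e`. Integrating over `0 < y - m k ≤ k`, with
`m k = c`, bounds the square integral of `(G(w + 2ik) - G(w)) / (2k)` over `Im w > c` by
`N / (4 e c)`, independently of `k`; Fatou's lemma as `k → 0` gives the derivative estimate.
-/

open Set Filter Topology Function
open scoped ComplexConjugate ENNReal NNReal

section LogConvexSequence

lemma mul_one_sub_mul_pow_le_exp_neg_one {r : ℝ} (hr : 0 ≤ r) (m : ℕ) :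
    m * (1 - r) * r ^ m ≤ Real.exp (-1) := by
  have hpow : r ^ m ≤ Real.exp (-(m * (1 - r))) :=
    calc r ^ m ≤ Real.exp (r - 1) ^ m := by
          gcongr
          linarith [Real.add_one_le_exp (r - 1)]
      _ = Real.exp (-(m * (1 - r))) := by rw [← Real.exp_nat_mul]; ring_nf
  calc m * (1 - r) * r ^ m ≤ Real.exp (m * (1 - r) - 1) * r ^ m := by
        gcongr
        linarith [Real.add_one_le_exp (m * (1 - r) - 1)]
    _ ≤ Real.exp (m * (1 - r) - 1) * Real.exp (-(m * (1 - r))) := by gcongr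
    _ = Real.exp (-1) := by rw [← Real.exp_add]; ring_nf

variable {a : ℕ → ℝ}

lemma pow_succ_le_pow_mul_of_logConvex (h0 : ∀ j, 0 ≤ a j)
    (hlog : ∀ j, a (j + 1) ^ 2 ≤ a j * a (j + 2)) (m : ℕ) :
    a m ^ (m + 1) ≤ a (m + 1) ^ m * a 0 := by
  induction m with
  | zero => simp
  | succ m ih =>
    rcases (h0 (m + 1)).eq_or_lt with hz | hpos
    · rw [← hz, zero_pow (by omega)]
      exact mul_nonneg (pow_nonneg (h0 _) _) (h0 _)
    refine le_of_mul_le_mul_left ?_ (pow_pos hpos m)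
    calc a (m + 1) ^ m * a (m + 1) ^ (m + 1 + 1) = (a (m + 1) ^ 2) ^ (m + 1) := by ring
      _ ≤ (a m * a (m + 2)) ^ (m + 1) := by gcongr; exact hlog m
      _ = a m ^ (m + 1) * a (m + 2) ^ (m + 1) := mul_pow _ _ _
      _ ≤ a (m + 1) ^ m * a 0 * a (m + 2) ^ (m + 1) := by
          gcongr
          exact pow_nonneg (h0 _) _
      _ = a (m + 1) ^ m * (a (m + 1 + 1) ^ (m + 1) * a 0) := by ring

lemma mul_sub_succ_le_of_logConvex (h0 : ∀ j, 0 ≤ a j)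
    (hlog : ∀ j, a (j + 1) ^ 2 ≤ a j * a (j + 2)) (m : ℕ) :
    m * (a m - a (m + 1)) ≤ Real.exp (-1) * a 0 := by
  have hrhs : 0 ≤ Real.exp (-1) * a 0 := mul_nonneg (Real.exp_pos _).le (h0 0)
  rcases (h0 m).eq_or_lt with hz | hpos
  · rw [← hz, zero_sub]
    exact (mul_nonpos_of_nonneg_of_nonpos m.cast_nonneg (neg_nonpos.2 (h0 _))).trans hrhs
  set r := a (m + 1) / a m
  have hr : 0 ≤ r := div_nonneg (h0 _) (h0 _)
  have hsucc : a (m + 1) = r * a m := (div_mul_cancel₀ _ hpos.ne').symm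
  have hle : a m ≤ r ^ m * a 0 := by
    refine le_of_mul_le_mul_left ?_ (pow_pos hpos m)
    calc a m ^ m * a m ≤ (r * a m) ^ m * a 0 := by
          rw [← hsucc, ← pow_succ]
          exact pow_succ_le_pow_mul_of_logConvex h0 hlog m
      _ = a m ^ m * (r ^ m * a 0) := by ring
  rcases le_total r 1 with hr1 | hr1
  · calc m * (a m - a (m + 1)) = m * (1 - r) * a m := by rw [hsucc]; ring
      _ ≤ m * (1 - r) * (r ^ m * a 0) := by
          have := sub_nonneg.2 hr1
          gcongr
      _ = m * (1 - r) * r ^ m * a 0 := by ring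
      _ ≤ Real.exp (-1) * a 0 := by
          gcongr
          exacts [h0 0, mul_one_sub_mul_pow_le_exp_neg_one hr m]
  · have hle_succ : a m ≤ a (m + 1) := hsucc ▸ le_mul_of_one_le_left hpos.le hr1
    exact (mul_nonpos_of_nonneg_of_nonpos m.cast_nonneg (sub_nonpos.2 hle_succ)).trans hrhs

lemma antitone_of_convex_of_bddAbove (hconv : ∀ j, 2 * a (j + 1) ≤ a j + a (j + 2))
    (hbdd : BddAbove (range a)) : Antitone a := by
  obtain ⟨N, hN⟩ := hbdd
  refine antitone_nat_of_succ_le fun j => ?_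
  by_contra! hlt
  have hstep : Monotone fun i => a (i + 1) - a i :=
    monotone_nat_of_le_succ fun i => by linarith [hconv i]
  have hgrow : ∀ n : ℕ, a j + n * (a (j + 1) - a j) ≤ a (j + n) := by
    intro n
    induction n with
    | zero => simp
    | succ n ih =>
      have hinc : a (j + 1) - a j ≤ a (j + n + 1) - a (j + n) := hstep (Nat.le_add_right j n)
      rw [← Nat.add_assoc]
      push_cast
      linarith
  obtain ⟨n, hn⟩ := exists_nat_gt ((N - a j) / (a (j + 1) - a j))
  rw [div_lt_iff₀ (by linarith)] at hn
  linarith [hgrow n, hN (mem_range_self (j + n))]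

variable {𝕜 E : Type*} [RCLike 𝕜] [NormedAddCommGroup E] [InnerProductSpace 𝕜 E]

lemma mul_tsum_enorm_sub_sq_le {u : ℕ → E} {N : ℝ}
    (hu : ∀ j, RCLike.re (inner 𝕜 (u (j + 2)) (u j)) = ‖u (j + 1)‖ ^ 2)
    (hN : ∀ j, ‖u j‖ ^ 2 ≤ N) (m : ℕ) :
    m * ∑' j, ‖u (m + j + 2) - u (m + j)‖ₑ ^ 2 ≤ ENNReal.ofReal (Real.exp (-1) * N) := by
  set a : ℕ → ℝ := fun j => ‖u j‖ ^ 2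
  have hdiff : ∀ j, ‖u (j + 2) - u j‖ ^ 2 = (a j - a (j + 1)) - (a (j + 1) - a (j + 2)) := by
    intro j
    rw [norm_sub_sq (𝕜 := 𝕜), hu]
    ring
  have hlog : ∀ j, a (j + 1) ^ 2 ≤ a j * a (j + 2) := fun j => by
    have h := re_inner_le_norm (𝕜 := 𝕜) (u (j + 2)) (u j)
    rw [hu] at h
    calc a (j + 1) ^ 2 ≤ (‖u (j + 2)‖ * ‖u j‖) ^ 2 := by gcongr
      _ = a j * a (j + 2) := by ring
  have hanti : Antitone a := by
    refine antitone_of_convex_of_bddAbove (fun j => ?_) ⟨N, forall_mem_range.2 hN⟩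
    linarith [hdiff j, sq_nonneg ‖u (j + 2) - u j‖]
  have hdec : m * (a m - a (m + 1)) ≤ Real.exp (-1) * N :=
    (mul_sub_succ_le_of_logConvex (a := a) (fun _ => sq_nonneg _) hlog m).trans
      (mul_le_mul_of_nonneg_left (hN 0) (Real.exp_pos _).le)
  rw [← ENNReal.tsum_mul_left]
  refine ENNReal.tsum_le_of_sum_range_le fun n => ?_
  calc ∑ j ∈ Finset.range n, (m : ℝ≥0∞) * ‖u (m + j + 2) - u (m + j)‖ₑ ^ 2
      = ENNReal.ofReal (∑ j ∈ Finset.range n, m * ‖u (m + j + 2) - u (m + j)‖ ^ 2) := by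
        rw [ENNReal.ofReal_sum_of_nonneg fun j _ => by positivity]
        simp [ENNReal.ofReal_mul, ENNReal.ofReal_pow]
    _ = ENNReal.ofReal (m * ((a m - a (m + 1)) - (a (m + n) - a (m + n + 1)))) := by
        simp_rw [← Finset.mul_sum, hdiff]
        congr 2
        exact Finset.sum_range_sub' (fun j => a (m + j) - a (m + j + 1)) n
    _ ≤ ENNReal.ofReal (Real.exp (-1) * N) := by
        refine ENNReal.ofReal_le_ofReal (le_trans ?_ hdec)
        refine mul_le_mul_of_nonneg_left ?_ m.cast_nonneg
        linarith [hanti (Nat.le_succ (m + n))]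

end LogConvexSequence

lemma lintegral_Ioi_eq_lintegral_tsum {f : ℝ → ℝ≥0∞} (hf : Measurable f) (c : ℝ) {k : ℝ}
    (hk : 0 < k) :
    ∫⁻ y in Ioi c, f y = ∫⁻ y in Ioc c (c + k), ∑' j : ℕ, f (y + j * k) := by
  have hmono : Monotone fun j : ℕ => c + j * k := fun i j hij => by simp only; gcongr
  have hunion : ⋃ j : ℕ, Ioc (c + j * k) (c + (j + 1 : ℕ) * k) = Ioi c := by
    have hub : ¬ BddAbove (range fun j : ℕ => c + j * k) :=
      not_bddAbove_of_tendsto_atTop (tendsto_atTop_add_const_left _ _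
        (tendsto_natCast_atTop_atTop.atTop_mul_const hk))
    simpa using iUnion_Ioc_map_succ_eq_Ioi (fun j => hmono j.zero_le) hub
  rw [← hunion, lintegral_iUnion (s := fun j : ℕ => Ioc (c + j * k) (c + (j + 1 : ℕ) * k))
      (fun _ => measurableSet_Ioc) hmono.pairwise_disjoint_on_Ioc_succ,
    lintegral_tsum (f := fun (j : ℕ) y => f (y + j * k)) fun j => by fun_prop]
  refine tsum_congr fun j => ?_
  rw [← (measurePreserving_add_right volume (j * k)).setLIntegral_comp_preimage_emb
    (measurableEmbedding_addRight _), preimage_add_const_Ioc]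
  push_cast
  ring_nf

lemma eLpNorm_two_sq_eq_lintegral {α E : Type*} [MeasurableSpace α] [NormedAddCommGroup E]
    (f : α → E) (μ : Measure α) : eLpNorm f 2 μ ^ 2 = ∫⁻ x, ‖f x‖ₑ ^ 2 ∂μ := by
  simpa using eLpNorm_nnreal_pow_eq_lintegral (f := f) (μ := μ) (p := 2) two_ne_zero

lemma memLp_prod_of_lintegral_rpow_le {α β E : Type*} [MeasurableSpace α] [MeasurableSpace β]
    [NormedAddCommGroup E] {μ : Measure α} [SFinite μ] {ν : Measure β} [IsFiniteMeasure ν]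
    {p : ℝ≥0∞} (hp0 : p ≠ 0) (hp : p ≠ ⊤) {f : α × β → E}
    (hf : AEStronglyMeasurable f (μ.prod ν)) {C : ℝ≥0}
    (hC : ∀ᵐ b ∂ν, ∫⁻ a, ‖f (a, b)‖ₑ ^ p.toReal ∂μ ≤ C) : MemLp f p (μ.prod ν) := by
  refine ⟨hf, (eLpNorm_lt_top_iff_lintegral_rpow_enorm_lt_top hp0 hp).2 ?_⟩
  calc ∫⁻ x, ‖f x‖ₑ ^ p.toReal ∂μ.prod ν = ∫⁻ b, ∫⁻ a, ‖f (a, b)‖ₑ ^ p.toReal ∂μ ∂ν :=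
        lintegral_prod_symm _ (hf.enorm.pow_const _)
    _ ≤ ∫⁻ _, C ∂ν := lintegral_mono_ae hC
    _ < ⊤ := by
        rw [lintegral_const]
        exact ENNReal.mul_lt_top ENNReal.coe_lt_top (measure_lt_top ν _)

lemma measurable_indicator_of_measurable_domRestrict {α β : Type*} [MeasurableSpace α]
    [MeasurableSpace β] [Zero β] {s : Set α} (hs : MeasurableSet s) {f : α → β}
    (hf : Measurable (s.domRestrict f)) : Measurable (s.indicator f) := by
  classical
  rw [← piecewise_eq_indicator]
  refine measurable_of_restrict_of_restrict_compl hs (by rwa [domRestrict_piecewise]) ?_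
  rw [domRestrict_piecewise_compl]
  exact measurable_zero.comp measurable_subtype_coe

lemma setLIntegral_lt_im_eq {X : Type*} [MeasurableSpace X] {μ : Measure X} [SFinite μ]
    {g : X × ℂ → ℝ≥0∞} (hg : Measurable g) (c : ℝ) :
    ∫⁻ p in {p | c < p.2.im}, g p ∂μ.prod volume =
      ∫⁻ y in Ioi c, ∫⁻ q : X × ℝ, g (q.1, q.2 + y * I) ∂μ.prod volume := by
  have hpres : MeasurePreserving (fun z : (X × ℝ) × ℝ => (z.1.1, (z.1.2 + z.2 * I : ℂ)))
      ((μ.prod volume).prod volume) (μ.prod volume) := by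
    convert ((MeasurePreserving.id μ).prod volume_preserving_equiv_real_prod.symm).comp
      (measurePreserving_prodAssoc μ (volume : Measure ℝ) (volume : Measure ℝ)) using 1
    funext z
    exact Prod.ext rfl (mk_eq_add_mul_I z.1.2 z.2).symm
  have hS : MeasurableSet {p : X × ℂ | c < p.2.im} := measurableSet_lt (by fun_prop) (by fun_prop)
  have hind := hg.indicator hS
  have hcomp : Measurable fun z : (X × ℝ) × ℝ =>
      {p : X × ℂ | c < p.2.im}.indicator g (z.1.1, z.1.2 + z.2 * I) := hind.comp hpres.measurable
  rw [← lintegral_indicator hS, ← hpres.lintegral_comp hind,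
    lintegral_prod_symm' _ hcomp, ← lintegral_indicator measurableSet_Ioi]
  refine lintegral_congr fun y => ?_
  by_cases hy : c < y <;> simp [indicator, hy]

lemma integral_horizontalLine_eq_of_differentiableOn {E : Type*} [NormedAddCommGroup E]
    [NormedSpace ℂ E] {h : ℂ → E} {s₁ s₂ : ℝ}
    (hd : DifferentiableOn ℂ h {w | w.im ∈ uIcc s₁ s₂})
    (h₁ : Integrable fun t : ℝ => h (t + s₁ * I)) (h₂ : Integrable fun t : ℝ => h (t + s₂ * I))
    (hW : Integrable fun t : ℝ => ∫ s in s₁..s₂, h (t + s * I)) :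
    ∫ t : ℝ, h (t + s₁ * I) = ∫ t : ℝ, h (t + s₂ * I) := by
  set W : ℝ → E := fun t => ∫ s in s₁..s₂, h (t + s * I)
  have hrect : ∀ T : ℝ, (∫ t in (-T)..T, h (t + s₁ * I)) - (∫ t in (-T)..T, h (t + s₂ * I)) =
      I • (W (-T) - W T) := by
    intro T
    have hzero := integral_boundary_rect_eq_zero_of_differentiableOn h (⟨-T, s₁⟩ : ℂ) ⟨T, s₂⟩
      (hd.mono fun w hw => hw.2)
    simp only at hzero
    rw [smul_sub, ← sub_eq_zero, ← hzero]
    abel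
  have hlim : Tendsto (fun T => I • (W (-T) - W T)) atTop
      (𝓝 ((∫ t : ℝ, h (t + s₁ * I)) - ∫ t : ℝ, h (t + s₂ * I))) := by
    simp_rw [← hrect]
    exact (intervalIntegral_tendsto_integral h₁ tendsto_neg_atTop_atBot tendsto_id).sub
      (intervalIntegral_tendsto_integral h₂ tendsto_neg_atTop_atBot tendsto_id)
  have hint : Integrable fun T => I • (W (-T) - W T) := (hW.comp_neg.sub hW).smul I
  -- An integrable function that converges at infinity converges to zero.
  refine sub_eq_zero.1 ((hint.integrableAtFilter atTop).eq_zero_of_tendsto ?_ hlim)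
  intro s hs
  obtain ⟨b, hb⟩ := mem_atTop_sets.1 hs
  rw [← top_le_iff, ← Real.volume_Ici (a := b)]
  exact measure_mono hb

lemma differentiableOn_mul_conj_reflection {f : ℂ → ℂ}
    (hf : DifferentiableOn ℂ f {w | 0 < w.im}) (σ : ℝ) :
    DifferentiableOn ℂ (fun w => f w * conj (f (conj w + σ * I))) {w | w.im ∈ Ioo 0 σ} := by
  have hf' : ∀ w : ℂ, 0 < w.im → DifferentiableAt ℂ f w := fun w hw =>
    hf.differentiableAt ((isOpen_lt continuous_const continuous_im).mem_nhds hw)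
  rintro w ⟨h0, hσ⟩
  have hg : DifferentiableAt ℂ (fun w => f (w + σ * I)) (conj w) :=
    (hf' (conj w + σ * I) (by simpa using hσ)).comp (conj w) (f := fun w => w + σ * I)
      (by fun_prop)
  have hg' : DifferentiableAt ℂ (fun w => conj (f (conj w + σ * I))) w := by
    simpa [Function.comp_def] using hg.conj_conj
  exact ((hf' w h0).mul hg').differentiableWithinAt

lemma tendsto_enorm_verticalSlope {f : ℂ → ℂ} {w : ℂ} (hf : DifferentiableAt ℂ f w) :
    Tendsto (fun s : ℝ => ‖(s : ℂ)⁻¹ * (f (w + s * I) - f w)‖ₑ) (𝓝[≠] 0) (𝓝 ‖deriv f w‖ₑ) := by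
  have hline : HasDerivAt (fun s : ℝ => w + s * I) I 0 := by
    simpa using ((hasDerivAt_id (0 : ℝ)).ofReal_comp.mul_const I).const_add w
  have hslope := hasDerivAt_iff_tendsto_slope.1 (hf.hasDerivAt.scomp_of_eq 0 hline (by simp))
  have hI : ‖I‖ₑ = 1 := by simp [enorm_eq_nnnorm]
  simpa [slope_def_module, enorm_smul, hI] using hslope.enorm

section HardyFamily

variable {X : Type*} [MeasurableSpace X] {μ : Measure X} {G : X → ℂ → ℂ} {N : ℝ≥0}

/-- The restriction of the functions `G x` to the horizontal line `Im w = y`, as a function of the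
parameter `x` and the real part of `w`. -/
def horizontalSlice (G : X → ℂ → ℂ) (y : ℝ) (q : X × ℝ) : ℂ :=
  G q.1 (q.2 + y * I)

lemma measurable_horizontalSlice (hG : Measurable (uncurry G)) :
    Measurable fun x : ℝ × X × ℝ => horizontalSlice G x.1 x.2 :=
  hG.comp (f := fun x : ℝ × X × ℝ => (x.2.1, (x.2.2 : ℂ) + x.1 * I)) (by fun_prop)

variable (μ G N) in
/-- A measurable family of holomorphic functions on the upper half-plane whose squared `L²` norms
on horizontal lines, integrated over the parameter, are at most `N`: an element of the Hardy space
`H²` with values in `L²(μ)`. -/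
structure IsHardyFamily : Prop where
  measurable : Measurable (uncurry G)
  differentiableOn : ∀ x, DifferentiableOn ℂ (G x) {w | 0 < w.im}
  lintegral_le : ∀ y, 0 < y → ∫⁻ q, ‖horizontalSlice G y q‖ₑ ^ 2 ∂μ.prod volume ≤ N

namespace IsHardyFamily

lemma memLp_horizontalSlice (hG : IsHardyFamily μ G N) {y : ℝ} (hy : 0 < y) :
    MemLp (horizontalSlice G y) 2 (μ.prod volume) := by
  refine ⟨((measurable_horizontalSlice hG.measurable).comp
    measurable_prodMk_left).aestronglyMeasurable, ?_⟩
  have h := (hG.lintegral_le y hy).trans_lt ENNReal.coe_lt_top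
  rw [← eLpNorm_two_sq_eq_lintegral] at h
  simpa using h

variable [SFinite μ]

lemma integrable_horizontalSlice_mul_conj_prod (hG : IsHardyFamily μ G N) {σ s₁ s₂ : ℝ}
    (h₁ : s₁ ∈ Ioo 0 σ) (h₂ : s₂ ∈ Ioo 0 σ) :
    Integrable
      (fun x : (X × ℝ) × ℝ =>
        horizontalSlice G x.2 x.1 * conj (horizontalSlice G (σ - x.2) x.1))
      ((μ.prod volume).prod (volume.restrict (uIoc s₁ s₂))) := by
  have hm := measurable_horizontalSlice hG.measurable
  have hsub : uIoc s₁ s₂ ⊆ Ioo 0 σ :=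
    uIoc_subset_uIcc.trans ((convex_Ioo 0 σ).ordConnected.uIcc_subset h₁ h₂)
  have : IsFiniteMeasure (volume.restrict (uIoc s₁ s₂)) := ⟨by simp [uIoc]⟩
  have hmem : ∀ g : ℝ → ℝ, Measurable g → (∀ s ∈ Ioo 0 σ, 0 < g s) →
      MemLp (fun x : (X × ℝ) × ℝ => horizontalSlice G (g x.2) x.1) 2
        ((μ.prod volume).prod (volume.restrict (uIoc s₁ s₂))) := by
    intro g hg hg0
    refine memLp_prod_of_lintegral_rpow_le (C := N) two_ne_zero ENNReal.ofNat_ne_top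
      (hm.comp (f := fun x : (X × ℝ) × ℝ => (g x.2, x.1)) (by fun_prop)).aestronglyMeasurable ?_
    filter_upwards [ae_restrict_mem measurableSet_uIoc] with s hs
    simpa using hG.lintegral_le (g s) (hg0 s (hsub hs))
  exact (hmem id measurable_id fun s hs => hs.1).integrable_mul
    (hmem (fun s => σ - s) (by fun_prop) fun s hs => sub_pos.2 hs.2).star

lemma integral_horizontalSlice_mul_conj_eq (hG : IsHardyFamily μ G N) {σ s₁ s₂ : ℝ}
    (h₁ : s₁ ∈ Ioo 0 σ) (h₂ : s₂ ∈ Ioo 0 σ) :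
    ∫ q, horizontalSlice G s₁ q * conj (horizontalSlice G (σ - s₁) q) ∂μ.prod volume =
      ∫ q, horizontalSlice G s₂ q * conj (horizontalSlice G (σ - s₂) q) ∂μ.prod volume := by
  have hline : ∀ s ∈ Ioo 0 σ, Integrable
      (fun q => horizontalSlice G s q * conj (horizontalSlice G (σ - s) q)) (μ.prod volume) :=
    fun s hs => (hG.memLp_horizontalSlice hs.1).integrable_mul
      (hG.memLp_horizontalSlice (sub_pos.2 hs.2)).star
  have hvert : Integrable (fun q => ∫ s in s₁..s₂,
      horizontalSlice G s q * conj (horizontalSlice G (σ - s) q)) (μ.prod volume) := by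
    simp_rw [intervalIntegral.intervalIntegral_eq_integral_uIoc]
    exact (hG.integrable_horizontalSlice_mul_conj_prod h₁ h₂).integral_prod_left.smul _
  have hreflect : ∀ x (t s : ℝ),
      horizontalSlice G s (x, t) * conj (horizontalSlice G (σ - s) (x, t)) =
        G x (t + s * I) * conj (G x (conj (t + s * I : ℂ) + σ * I)) := by
    intro x t s
    simp only [horizontalSlice, map_add, map_mul, conj_ofReal, conj_I]
    push_cast
    ring_nf
  rw [integral_prod _ (hline s₁ h₁), integral_prod _ (hline s₂ h₂)]
  refine integral_congr_ae ?_
  filter_upwards [hvert.prod_right_ae, (hline s₁ h₁).prod_right_ae, (hline s₂ h₂).prod_right_ae]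
    with x hx hx₁ hx₂
  simp only [hreflect] at hx hx₁ hx₂ ⊢
  exact integral_horizontalLine_eq_of_differentiableOn
    (h := fun w => G x w * conj (G x (conj w + σ * I)))
    ((differentiableOn_mul_conj_reflection (hG.differentiableOn x) σ).mono fun w hw =>
      (convex_Ioo 0 σ).ordConnected.uIcc_subset h₁ h₂ hw) hx₁ hx₂ hx

lemma re_inner_toLp_horizontalSlice (hG : IsHardyFamily μ G N) {a b c : ℝ} (ha : 0 < a)
    (hb : 0 < b) (hc : 0 < c) (habc : a + b = 2 * c) :
    RCLike.re (inner ℂ (hG.memLp_horizontalSlice hb).toLp (hG.memLp_horizontalSlice ha).toLp) =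
      ‖(hG.memLp_horizontalSlice hc).toLp‖ ^ 2 := by
  have hinner : ∀ {s t : ℝ} (hs : 0 < s) (ht : 0 < t),
      inner ℂ (hG.memLp_horizontalSlice ht).toLp (hG.memLp_horizontalSlice hs).toLp =
        ∫ q, horizontalSlice G s q * conj (horizontalSlice G t q) ∂μ.prod volume := by
    intro s t hs ht
    rw [L2.inner_def]
    refine integral_congr_ae ?_
    filter_upwards [(hG.memLp_horizontalSlice hs).coeFn_toLp,
      (hG.memLp_horizontalSlice ht).coeFn_toLp] with q hq₁ hq₂
    rw [hq₁, hq₂, RCLike.inner_apply]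
  have hshift := hG.integral_horizontalSlice_mul_conj_eq (σ := a + b) (s₁ := a) (s₂ := c)
    ⟨ha, by linarith⟩ ⟨hc, by linarith⟩
  rw [← inner_self_eq_norm_sq (𝕜 := ℂ), hinner ha hb, hinner hc hc]
  rw [add_sub_cancel_left, show a + b - c = c by linarith] at hshift
  rw [hshift]

lemma mul_tsum_lintegral_horizontalSlice_sub_sq_le (hG : IsHardyFamily μ G N) {m : ℕ} {k y : ℝ}
    (hk : 0 < k) (hy : m * k < y) :
    m * ∑' j : ℕ, ∫⁻ q,
        ‖horizontalSlice G (y + j * k + 2 * k) q - horizontalSlice G (y + j * k) q‖ₑ ^ 2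
          ∂μ.prod volume ≤
      ENNReal.ofReal (Real.exp (-1) * N) := by
  set h : ℕ → ℝ := fun j => y - m * k + j * k
  have hpos : ∀ j, 0 < h j := fun j => add_pos_of_pos_of_nonneg (sub_pos.2 hy) (by positivity)
  set u : ℕ → Lp ℂ 2 (μ.prod (volume : Measure ℝ)) :=
    fun j => (hG.memLp_horizontalSlice (hpos j)).toLp
  have hnorm : ∀ j, ‖u j‖ ^ 2 ≤ N := by
    intro j
    have henorm : ‖u j‖ₑ ^ 2 ≤ N := by
      rw [Lp.enorm_toLp, eLpNorm_two_sq_eq_lintegral]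
      exact hG.lintegral_le _ (hpos j)
    rw [enorm_eq_nnnorm] at henorm
    exact_mod_cast henorm
  have hinner : ∀ j, RCLike.re (inner ℂ (u (j + 2)) (u j)) = ‖u (j + 1)‖ ^ 2 := fun j =>
    hG.re_inner_toLp_horizontalSlice (hpos _) (hpos _) (hpos _) (by simp only [h]; push_cast; ring)
  convert mul_tsum_enorm_sub_sq_le hinner hnorm m using 4 with j
  rw [← MemLp.toLp_sub, Lp.enorm_toLp, eLpNorm_two_sq_eq_lintegral]
  have h₀ : h (m + j) = y + j * k := by simp only [h]; push_cast; ring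
  have h₂ : h (m + j + 2) = y + j * k + 2 * k := by simp only [h]; push_cast; ring
  simp only [h₀, h₂, Pi.sub_apply]

lemma mul_lintegral_horizontalSlice_sub_sq_le (hG : IsHardyFamily μ G N) (m : ℕ) {k : ℝ}
    (hk : 0 < k) :
    m * ∫⁻ y in Ioi (m * k), ∫⁻ q,
        ‖horizontalSlice G (y + 2 * k) q - horizontalSlice G y q‖ₑ ^ 2 ∂μ.prod volume ≤
      ENNReal.ofReal (Real.exp (-1) * N) * ENNReal.ofReal k := by
  have hm := measurable_horizontalSlice hG.measurable
  have hmeas : Measurable fun y : ℝ =>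
      ∫⁻ q, ‖horizontalSlice G (y + 2 * k) q - horizontalSlice G y q‖ₑ ^ 2 ∂μ.prod volume := by
    refine Measurable.lintegral_prod_right' (f := fun x : ℝ × X × ℝ =>
      ‖horizontalSlice G (x.1 + 2 * k) x.2 - horizontalSlice G x.1 x.2‖ₑ ^ 2) ?_
    exact ((hm.comp (f := fun x : ℝ × X × ℝ => (x.1 + 2 * k, x.2)) (by fun_prop)).sub
      hm).enorm.pow_const 2
  rw [lintegral_Ioi_eq_lintegral_tsum hmeas _ hk, ← lintegral_const_mul _ (by fun_prop)]
  calc _ ≤ ∫⁻ _ in Ioc (m * k) (m * k + k), ENNReal.ofReal (Real.exp (-1) * N) :=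
        setLIntegral_mono measurable_const fun y hy =>
          hG.mul_tsum_lintegral_horizontalSlice_sub_sq_le hk hy.1
    _ = ENNReal.ofReal (Real.exp (-1) * N) * ENNReal.ofReal k := by
        rw [setLIntegral_const, Real.volume_Ioc, add_sub_cancel_left]

lemma lintegral_verticalSlope_sq_le (hG : IsHardyFamily μ G N) {m : ℕ} (hm : m ≠ 0) {k : ℝ}
    (hk : 0 < k) :
    ∫⁻ p in {p | m * k < p.2.im},
        ‖((2 * k : ℝ) : ℂ)⁻¹ * (G p.1 (p.2 + (2 * k : ℝ) * I) - G p.1 p.2)‖ₑ ^ 2 ∂μ.prod volume ≤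
      ENNReal.ofReal ((m * k)⁻¹ / (4 * Real.exp 1)) * N := by
  have hscale : ∀ z : ℂ, ‖((2 * k : ℝ) : ℂ)⁻¹ * z‖ₑ ^ 2 =
      ENNReal.ofReal ((2 * k)⁻¹ ^ 2) * ‖z‖ₑ ^ 2 := by
    intro z
    rw [enorm_mul, mul_pow, ← ofReal_norm, ← ofReal_inv, norm_real,
      Real.norm_of_nonneg (by positivity), ENNReal.ofReal_pow (by positivity)]
  have hmeas : Measurable fun p : X × ℂ => ‖G p.1 (p.2 + (2 * k : ℝ) * I) - G p.1 p.2‖ₑ ^ 2 :=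
    ((hG.measurable.comp (f := fun p : X × ℂ => (p.1, p.2 + (2 * k : ℝ) * I)) (by fun_prop)).sub
      hG.measurable).enorm.pow_const 2
  have hslices : ∀ (y : ℝ) (q : X × ℝ), G q.1 (q.2 + y * I + (2 * k : ℝ) * I) -
      G q.1 (q.2 + y * I) = horizontalSlice G (y + 2 * k) q - horizontalSlice G y q := by
    intro y q
    simp only [horizontalSlice, ofReal_add, add_mul, add_assoc]
  have hm0 : (m : ℝ≥0∞) ≠ 0 := by exact_mod_cast hm
  have hm_pos : (0 : ℝ) < m := by positivity
  have hbound : ∫⁻ y in Ioi (m * k), ∫⁻ q,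
      ‖horizontalSlice G (y + 2 * k) q - horizontalSlice G y q‖ₑ ^ 2 ∂μ.prod volume ≤
        ENNReal.ofReal (Real.exp (-1) * N) * ENNReal.ofReal k / m := by
    rw [ENNReal.le_div_iff_mul_le (.inl hm0) (.inl (ENNReal.natCast_ne_top m)), mul_comm]
    exact hG.mul_lintegral_horizontalSlice_sub_sq_le m hk
  simp_rw [hscale]
  rw [lintegral_const_mul _ hmeas, setLIntegral_lt_im_eq hmeas]
  simp_rw [hslices]
  calc _ ≤ ENNReal.ofReal ((2 * k)⁻¹ ^ 2) *
          (ENNReal.ofReal (Real.exp (-1) * N) * ENNReal.ofReal k / m) := by gcongr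
    _ = ENNReal.ofReal ((m * k)⁻¹ / (4 * Real.exp 1)) * N := by
        rw [← ENNReal.ofReal_natCast m, ← ENNReal.ofReal_coe_nnreal (p := N),
          ← ENNReal.ofReal_mul (by positivity), ← ENNReal.ofReal_div_of_pos hm_pos,
          ← ENNReal.ofReal_mul (by positivity), ← ENNReal.ofReal_mul (by positivity), Real.exp_neg]
        congr 1
        field_simp
        ring

theorem lintegral_deriv_sq_le (hG : IsHardyFamily μ G N) {c : ℝ} (hc : 0 < c) :
    ∫⁻ p in {p | c < p.2.im}, ‖deriv (G p.1) p.2‖ₑ ^ 2 ∂μ.prod volume ≤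
      ENNReal.ofReal (c⁻¹ / (4 * Real.exp 1)) * N := by
  set k : ℕ → ℝ := fun n => c / (n + 1 : ℕ)
  have hk : ∀ n, 0 < k n := fun n => by positivity
  have hmk : ∀ n, (n + 1 : ℕ) * k n = c := fun n => mul_div_cancel₀ _ (by positivity)
  have hlim : Tendsto (fun n => 2 * k n) atTop (𝓝[≠] 0) := by
    refine tendsto_nhdsWithin_iff.2 ⟨?_, .of_forall fun n => (mul_pos two_pos (hk n)).ne'⟩
    simpa [k] using
      ((tendsto_const_div_atTop_nhds_zero_nat c).comp (tendsto_add_atTop_nat 1)).const_mul 2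
  set Q : ℕ → X × ℂ → ℝ≥0∞ := fun n p =>
    ‖((2 * k n : ℝ) : ℂ)⁻¹ * (G p.1 (p.2 + (2 * k n : ℝ) * I) - G p.1 p.2)‖ₑ ^ 2
  have hQ : ∀ n, Measurable (Q n) := fun n =>
    (((hG.measurable.comp (f := fun p : X × ℂ => (p.1, p.2 + (2 * k n : ℝ) * I))
      (by fun_prop)).sub hG.measurable).const_mul _).enorm.pow_const 2
  have hconv : ∀ p ∈ {p : X × ℂ | c < p.2.im},
      ‖deriv (G p.1) p.2‖ₑ ^ 2 = liminf (fun n => Q n p) atTop := by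
    intro p hp
    have hd : DifferentiableAt ℂ (G p.1) p.2 := (hG.differentiableOn p.1).differentiableAt
      ((isOpen_lt continuous_const continuous_im).mem_nhds (hc.trans hp))
    exact ((((ENNReal.continuous_pow 2).tendsto _).comp
      ((tendsto_enorm_verticalSlope hd).comp hlim)).liminf_eq).symm
  calc ∫⁻ p in {p | c < p.2.im}, ‖deriv (G p.1) p.2‖ₑ ^ 2 ∂μ.prod volume
      = ∫⁻ p in {p | c < p.2.im}, liminf (fun n => Q n p) atTop ∂μ.prod volume :=
        setLIntegral_congr_fun (measurableSet_lt (by fun_prop) (by fun_prop)) hconv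
    _ ≤ liminf (fun n => ∫⁻ p in {p | c < p.2.im}, Q n p ∂μ.prod volume) atTop :=
        lintegral_liminf_le hQ
    _ ≤ liminf (fun _ => ENNReal.ofReal (c⁻¹ / (4 * Real.exp 1)) * N) (atTop : Filter ℕ) := by
        refine liminf_le_liminf (.of_forall fun n => ?_)
        simpa only [hmk] using hG.lintegral_verticalSlope_sq_le n.succ_ne_zero (hk n)
    _ = ENNReal.ofReal (c⁻¹ / (4 * Real.exp 1)) * N := liminf_const _

end IsHardyFamily

end HardyFamily

section Epigraph

variable {X : Type*}

/-- The function `F` on the region above the graph of `P`, transported to the upper half-plane by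
the translations `w ↦ w + P x * I` and extended by zero. -/
noncomputable def straighten (P : X → ℝ) (F : X × ℂ → ℂ) (x : X) (w : ℂ) : ℂ :=
  indicator {p | P p.1 < p.2.im} F (x, w + P x * I)

variable {P : X → ℝ} {F : X × ℂ → ℂ}

lemma straighten_of_im_pos (x : X) {w : ℂ} (hw : 0 < w.im) :
    straighten P F x w = F (x, w + P x * I) :=
  indicator_of_mem (by simpa using hw) F

lemma deriv_straighten (x : X) {w : ℂ} (hw : 0 < w.im) :
    deriv (straighten P F x) w = deriv (fun w => F (x, w)) (w + P x * I) := by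
  have heq : straighten P F x =ᶠ[𝓝 w] fun w => F (x, w + P x * I) := by
    filter_upwards [(isOpen_lt continuous_const continuous_im).mem_nhds hw] with v hv
    exact straighten_of_im_pos x hv
  rw [heq.deriv_eq, deriv_comp_add_const (fun w => F (x, w))]

variable [MeasurableSpace X]

/-- The shear of `X × ℂ` that moves the fibre over `x` vertically by `g x`. -/
def verticalShear (g : X → ℝ) (hg : Measurable g) : X × ℂ ≃ᵐ X × ℂ where
  toFun p := (p.1, p.2 + g p.1 * I)
  invFun p := (p.1, p.2 - g p.1 * I)
  left_inv p := by simp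
  right_inv p := by simp
  measurable_toFun := by simp only [Equiv.coe_fn_mk]; fun_prop
  measurable_invFun := by simp only [Equiv.coe_fn_symm_mk]; fun_prop

lemma measurePreserving_verticalShear (μ : Measure X) [SFinite μ] {g : X → ℝ} (hg : Measurable g) :
    MeasurePreserving (verticalShear g hg) (μ.prod volume) (μ.prod volume) :=
  (MeasurePreserving.id μ).skew_product (g := fun x w => w + g x * I) (by fun_prop)
    (.of_forall fun x => (measurePreserving_add_right volume (g x * I)).map_eq)

lemma isHardyFamily_straighten {μ : Measure X} {N : ℝ≥0} (hP : Measurable P)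
    (hmeas : Measurable ({p | P p.1 < p.2.im}.domRestrict F))
    (hF : ∀ x, DifferentiableOn ℂ (fun w => F (x, w)) {w | P x < w.im})
    (hN : ∀ ε ∈ Ioi (0 : ℝ),
      ∫⁻ q : X × ℝ, ‖F (q.1, q.2 + (P q.1 + ε : ℝ) * I)‖ₑ ^ 2 ∂μ.prod volume ≤ N) :
    IsHardyFamily μ (straighten P F) N where
  measurable := by
    have hS : MeasurableSet {p : X × ℂ | P p.1 < p.2.im} :=
      measurableSet_lt (by fun_prop) (by fun_prop)
    exact (measurable_indicator_of_measurable_domRestrict hS hmeas).comp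
      (f := fun p : X × ℂ => (p.1, p.2 + P p.1 * I)) (by fun_prop)
  differentiableOn x := by
    refine DifferentiableOn.congr (f := fun w => F (x, w + P x * I)) ?_
      fun w hw => straighten_of_im_pos x hw
    exact (hF x).comp (f := fun w => w + P x * I) (by fun_prop) fun w hw => by simpa using hw
  lintegral_le y hy := by
    refine le_of_eq_of_le (lintegral_congr fun q => ?_) (hN y hy)
    rw [horizontalSlice, straighten_of_im_pos q.1 (by simpa using hy)]
    push_cast
    ring_nf

theorem lintegral_deriv_sq_le_iSup_lintegral_sq (μ : Measure X) [SFinite μ] (hP : Measurable P)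
    (hmeas : Measurable ({p | P p.1 < p.2.im}.domRestrict F))
    (hF : ∀ x, DifferentiableOn ℂ (fun w => F (x, w)) {w | P x < w.im}) {ε₀ : ℝ} (hε₀ : 0 < ε₀) :
    ∫⁻ p in {p | P p.1 < p.2.im}, ‖deriv (fun w => F (p.1, w)) (p.2 + ε₀ * I)‖ₑ ^ 2
        ∂μ.prod volume ≤
      ENNReal.ofReal (ε₀⁻¹ / (4 * Real.exp 1)) * ⨆ ε ∈ Ioi (0 : ℝ),
        ∫⁻ q : X × ℝ, ‖F (q.1, q.2 + (P q.1 + ε : ℝ) * I)‖ₑ ^ 2 ∂μ.prod volume := by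
  set N := ⨆ ε ∈ Ioi (0 : ℝ),
    ∫⁻ q : X × ℝ, ‖F (q.1, q.2 + (P q.1 + ε : ℝ) * I)‖ₑ ^ 2 ∂μ.prod volume
  rcases eq_or_ne N ⊤ with htop | hfin
  · rw [htop, ENNReal.mul_top (ENNReal.ofReal_pos.2 (by positivity)).ne']
    exact le_top
  have hG : IsHardyFamily μ (straighten P F) N.toNNReal := by
    refine isHardyFamily_straighten hP hmeas hF fun ε hε => ?_
    rw [ENNReal.coe_toNNReal hfin]
    exact le_iSup₂ (f := fun ε _ => ∫⁻ q : X × ℝ, ‖F (q.1, q.2 + (P q.1 + ε : ℝ) * I)‖ₑ ^ 2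
      ∂μ.prod volume) ε hε
  have hshear : Measurable fun x => P x - ε₀ := hP.sub_const ε₀
  have hpre : verticalShear _ hshear ⁻¹' {p | P p.1 < p.2.im} = {p | ε₀ < p.2.im} := by
    ext p
    simp [verticalShear, add_sub, lt_sub_iff_add_lt, add_comm]
  rw [← (measurePreserving_verticalShear μ hshear).setLIntegral_comp_preimage_emb
    (verticalShear _ hshear).measurableEmbedding, hpre]
  calc ∫⁻ p in {p | ε₀ < p.2.im}, ‖deriv (fun w => F ((verticalShear _ hshear p).1, w))
          ((verticalShear _ hshear p).2 + ε₀ * I)‖ₑ ^ 2 ∂μ.prod volume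
      = ∫⁻ p in {p | ε₀ < p.2.im}, ‖deriv (straighten P F p.1) p.2‖ₑ ^ 2 ∂μ.prod volume := by
        refine setLIntegral_congr_fun (measurableSet_lt (by fun_prop) (by fun_prop)) fun p hp => ?_
        simp only [deriv_straighten p.1 (hε₀.trans hp)]
        simp [verticalShear, sub_mul, add_assoc]
    _ ≤ ENNReal.ofReal (ε₀⁻¹ / (4 * Real.exp 1)) * N := by
        simpa only [ENNReal.coe_toNNReal hfin] using hG.lintegral_deriv_sq_le hε₀

end Epigraph

lemma fderiv_apply_zero_one_eq_deriv {𝕜 E E' : Type*} [NontriviallyNormedField 𝕜]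
    [NormedAddCommGroup E] [NormedSpace 𝕜 E] [NormedAddCommGroup E'] [NormedSpace 𝕜 E']
    {F : E × 𝕜 → E'} {p : E × 𝕜} (hF : DifferentiableAt 𝕜 F p) :
    fderiv 𝕜 F p (0, 1) = deriv (fun w => F (p.1, w)) p.2 :=
  (hF.hasFDerivAt.comp_hasDerivAt p.2
    ((hasDerivAt_const p.2 p.1).prodMk (hasDerivAt_id p.2))).deriv.symm

theorem statement19_general {E : Type*} [NormedAddCommGroup E] [NormedSpace ℂ E]
    [MeasurableSpace E] [BorelSpace E] (μ : Measure E) [SFinite μ] {P : E → ℝ}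
    (hP : Continuous P) {F : E × ℂ → ℂ} (hF : DifferentiableOn ℂ F {p | P p.1 < p.2.im})
    {ε₀ : ℝ} (hε₀ : 0 < ε₀) :
    ∫⁻ p in {p | P p.1 < p.2.im},
        ENNReal.ofReal (‖fderiv ℂ F (p.1, p.2 + ε₀ * I) (0, 1)‖ ^ 2) ∂μ.prod volume ≤
      ENNReal.ofReal (ε₀⁻¹ / (4 * Real.exp 1)) * ⨆ ε ∈ Ioi (0 : ℝ),
        ∫⁻ q : E × ℝ, ENNReal.ofReal (‖F (q.1, q.2 + (P q.1 + ε : ℝ) * I)‖ ^ 2)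
          ∂μ.prod volume := by
  have hΩ : IsOpen {p : E × ℂ | P p.1 < p.2.im} :=
    isOpen_lt (hP.comp continuous_fst) (continuous_im.comp continuous_snd)
  have hfibre : ∀ x, DifferentiableOn ℂ (fun w => F (x, w)) {w | P x < w.im} := fun x =>
    hF.comp (f := fun w => (x, w)) (by fun_prop) fun w hw => hw
  simp only [ENNReal.ofReal_pow (norm_nonneg _), ofReal_norm]
  refine le_of_eq_of_le (setLIntegral_congr_fun hΩ.measurableSet fun p hp => ?_)
    (lintegral_deriv_sq_le_iSup_lintegral_sq μ hP.measurable
      hF.continuousOn.domRestrict.measurable hfibre hε₀)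
  have hmem : (p.1, p.2 + ε₀ * I) ∈ {p : E × ℂ | P p.1 < p.2.im} := by
    simpa using hp.trans (lt_add_of_pos_right _ hε₀)
  simp only [fderiv_apply_zero_one_eq_deriv (hF.differentiableAt (hΩ.mem_nhds hmem))]

/-- Proposition B.3(ii): let `P : ℂ → ℝ` be smooth, subharmonic and non-harmonic,
`Ω = {(z,z₂) : Im z₂ > P(z)}`, and let `F` be holomorphic on `Ω` with finite Hardy norm
`‖F‖²_{H²(Ω)} = sup_{ε>0} ∫_{ℂ×ℝ} |F(z, t+i(P(z)+ε))|² dm(z,t)`. Then for every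
`ε₀ > 0`,
`∫_Ω |(∂F/∂z₂)(z, z₂+iε₀)|² dm ≤ (1/(4e)) ε₀⁻¹ ‖F‖²_{H²(Ω)}`. -/
theorem statement19 (P : ℂ → ℝ) (hP : ContDiff ℝ (⊤ : ℕ∞) P)
    (hsub : ∀ z : ℂ, 0 ≤ laplacian P z)
    (hnonharm : ∃ z : ℂ, laplacian P z ≠ 0)
    (F : ℂ × ℂ → ℂ)
    (hF : DifferentiableOn ℂ F {p : ℂ × ℂ | P p.1 < p.2.im})
    (hH2 : (⨆ ε ∈ Set.Ioi (0 : ℝ), ∫⁻ q : ℂ × ℝ,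
      ENNReal.ofReal (‖F (q.1, (q.2 : ℂ) + (P q.1 + ε : ℝ) * Complex.I)‖ ^ 2)) < ⊤)
    (ε₀ : ℝ) (hε₀ : 0 < ε₀) :
    (∫⁻ p in {p : ℂ × ℂ | P p.1 < p.2.im},
        ENNReal.ofReal (‖fderiv ℂ F (p.1, p.2 + (ε₀ : ℂ) * Complex.I) (0, 1)‖ ^ 2)) ≤
      ENNReal.ofReal (ε₀⁻¹ / (4 * Real.exp 1)) *
        ⨆ ε ∈ Set.Ioi (0 : ℝ), ∫⁻ q : ℂ × ℝ,
          ENNReal.ofReal (‖F (q.1, (q.2 : ℂ) + (P q.1 + ε : ℝ) * Complex.I)‖ ^ 2) :=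
  statement19_general volume hP.continuous hF hε₀
end
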